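/- arXiv:1707.09846 — 5 statements merged into one kernel-verified Lean document; each statement's English description precedes it below -/
import Mathlib

section
/- Let R be a finite commutative ring and let T : R[y] → R[y] be an R-linear operator such that: (1) deg T(f) < deg f for every nonzero f ∈ R[y]; (2) there exist an integer d ≥ 1 and polynomials a_1, …, a_d ∈ R[y] with deg a_i ≤ i for each i, such that T(y^n) = a_1·T(y^{n−1}) + a_2·T(y^{n−2}) + ⋯ + a_d·T(y^{n−d}) for all n ≥ d; (3) the coefficient of y^d in a_d is a unit of R. Then there exist a real number α < 1 and a constant C > 0 such that N_T(y^n) ≤ C·n^α for all n ≥ 1. -/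
open Polynomial

/-- The nilpotence index of `f` with respect to `T`: the largest `k` with `T^k f ≠ 0`. -/
noncomputable def nilpIndex {R : Type} [CommRing R]
    (T : Module.End R (Polynomial R)) (f : Polynomial R) : ℕ :=
  sSup {k : ℕ | (T ^ k) f ≠ 0}

/-!
Fix a prime `p`, let `K = R / pR`, write `z = 1 / y`, and replace `T (y ^ n)` by its reversal
`z ^ n * T (y ^ n)`, a polynomial in `z`. The reversals satisfy a linear recurrence over `K[z]`
whose characteristic polynomial is, modulo `z`, monic with unit constant coefficient; it therefore
divides `X ^ e - 1` modulo `z` for some `e > 0`, and raising this to the power `p ^ k` shows that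
the sequence of reversals has period `e * p ^ k` modulo `z ^ p ^ k`. Hence `T (y ^ (n + e * p ^ k))`
and `y ^ (e * p ^ k) * T (y ^ n)` have the same top `p ^ k` coefficients. Give `y ^ n` the weight
obtained by writing `n / e` in base `p` and evaluating its digits at a slightly smaller base `β`:
this weight is `O(n ^ α)` with `α = log β / log p < 1`, and by periodicity a suitable multiple of it
drops by at least one under `T`. So `O(n ^ α)` applications of `T` send polynomials of degree at
most `n` into `p R[y]`, and composing these estimates over the prime factors of the characteristic,
with multiplicity, gives zero.
-/

section Recurrence

variable {A : Type*} [CommRing A]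

/-- The left shift `u ↦ (n ↦ u (n + 1))`, through which the characteristic polynomial of a linear
recurrence acts on sequences. -/
def shift (A : Type*) [CommRing A] : Module.End A (ℕ → A) := LinearMap.funLeft A A Nat.succ

lemma shift_pow_apply (i : ℕ) (u : ℕ → A) (n : ℕ) : (shift A ^ i) u n = u (n + i) := by
  induction i generalizing n with
  | zero => rfl
  | succ i ih =>
    rw [pow_succ', Module.End.mul_apply, shift, LinearMap.funLeft_apply, ← shift, ih,
      Nat.succ_add_eq_add_succ]

lemma aeval_shift_charPoly {E : LinearRecurrence A} {u : ℕ → A}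
    (hu : E.IsSolution u) : aeval (shift A) E.charPoly u = 0 := by
  ext n
  simp [LinearRecurrence.charPoly, aeval_monomial, shift_pow_apply, hu n]

theorem pow_dvd_sub_of_isSolution {p : ℕ} [Fact p.Prime] [CharP A p] {E : LinearRecurrence A}
    {u : ℕ → A} (hu : E.IsSolution u) {e : ℕ} {z : A} {W : A[X]}
    (hW : E.charPoly ∣ X ^ e - 1 - C z * W) (k n : ℕ) :
    z ^ p ^ k ∣ u (n + e * p ^ k) - u n := by
  obtain ⟨G, hG⟩ : E.charPoly ∣ X ^ (e * p ^ k) - 1 - C (z ^ p ^ k) * W ^ p ^ k := by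
    have := dvd_pow hW (pow_ne_zero k (Fact.out : p.Prime).ne_zero)
    rwa [sub_pow_char_pow, sub_pow_char_pow, ← pow_mul, one_pow, mul_pow, ← C_pow] at this
  have hzero : aeval (shift A) (X ^ (e * p ^ k) - 1 - C (z ^ p ^ k) * W ^ p ^ k) u = 0 := by
    rw [hG, mul_comm, map_mul, Module.End.mul_apply, aeval_shift_charPoly hu, map_zero]
  refine ⟨aeval (shift A) (W ^ p ^ k) u n, sub_eq_zero.1 ?_⟩
  rw [map_sub, map_sub, map_mul, aeval_X_pow, map_one, aeval_C] at hzero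
  simpa [shift_pow_apply, -map_pow, Module.algebraMap_end_apply] using congrFun hzero n

lemma isOfFinOrder_of_isIntegral {m : ℕ} (hm : m ≠ 0) (hmA : (m : A) = 0) {x : Aˣ}
    (hx : IsIntegral ℤ (x : A)) : IsOfFinOrder x := by
  let S := Algebra.adjoin ℤ {(x : A)}
  have : Module.Finite ℤ S := Module.Finite.iff_fg.2 hx.fg_adjoin_singleton
  have htorsion : Module.IsTorsion ℤ S := fun {s} ↦
    ⟨⟨m, mem_nonZeroDivisors_of_ne_zero (by exact_mod_cast hm)⟩, by
      ext
      simp [Submonoid.mk_smul, hmA]⟩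
  have : Finite S := Module.finite_of_fg_torsion S htorsion
  rw [← finite_powers]
  refine Set.Finite.of_finite_image ((Set.toFinite (S : Set A)).subset ?_)
    (Units.val_injective.injOn)
  rintro _ ⟨_, ⟨n, rfl⟩, rfl⟩
  simpa using pow_mem (Algebra.subset_adjoin (Set.mem_singleton (x : A))) n

lemma isUnit_adjoinRoot_root {f : A[X]} (hf : IsUnit (f.coeff 0)) :
    IsUnit (AdjoinRoot.root f) := by
  obtain ⟨v, hv⟩ := (hf.map (AdjoinRoot.of f)).exists_right_inv
  refine IsUnit.of_mul_eq_one (-AdjoinRoot.mk f f.divX * v) ?_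
  have h := congrArg (AdjoinRoot.mk f) (X_mul_divX_add f)
  simp only [map_add, map_mul, AdjoinRoot.mk_X, AdjoinRoot.mk_C, AdjoinRoot.mk_self] at h
  linear_combination -v * h + hv

lemma exists_dvd_X_pow_sub_one [Algebra.IsIntegral ℤ A] {m : ℕ} (hm : m ≠ 0) (hmA : (m : A) = 0)
    {f : A[X]} (hf : f.Monic) (h0 : IsUnit (f.coeff 0)) : ∃ e, 0 < e ∧ f ∣ X ^ e - 1 := by
  have hint : IsIntegral ℤ (AdjoinRoot.root f) :=
    isIntegral_trans (A := A) _ ⟨f, hf, AdjoinRoot.eval₂_root f⟩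
  have hm' : (m : AdjoinRoot f) = 0 := by
    rw [← map_natCast (AdjoinRoot.of f), hmA, map_zero]
  obtain ⟨e, he, hpow⟩ := (isOfFinOrder_of_isIntegral hm hm'
    (x := (isUnit_adjoinRoot_root h0).unit) hint).exists_pow_eq_one
  refine ⟨e, he, AdjoinRoot.mk_eq_mk.1 ?_⟩
  simpa [Units.ext_iff] using hpow

end Recurrence

section PolynomialRecurrence

variable {K : Type*} [CommRing K]

lemma exists_charPoly_dvd_X_pow_sub_one_sub [Algebra.IsIntegral ℤ K] {m : ℕ} (hm : m ≠ 0)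
    (hmK : (m : K) = 0) (E : LinearRecurrence K[X]) (h0 : IsUnit ((E.charPoly.coeff 0).coeff 0)) :
    ∃ e, 0 < e ∧ ∃ W, E.charPoly ∣ X ^ e - 1 - C X * W := by
  obtain ⟨e, he, g, hg⟩ := exists_dvd_X_pow_sub_one hm hmK
    (E.charPoly_monic.map (constantCoeff : K[X] →+* K)) (by simpa using h0)
  obtain ⟨W, hW⟩ : C X ∣ X ^ e - 1 - E.charPoly * g.map C := by
    refine (C_dvd_iff_dvd_coeff _ _).2 fun i ↦ X_dvd_iff.2 ?_
    have hmap : (X ^ e - 1 - E.charPoly * g.map C).map (constantCoeff : K[X] →+* K) = 0 := by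
      have hC : (constantCoeff : K[X] →+* K).comp C = RingHom.id K := by ext; simp
      simp [Polynomial.map_map, hC, hg]
    rw [← constantCoeff_apply, ← coeff_map, hmap, coeff_zero]
  exact ⟨e, he, W, g.map C, by rw [← hW]; ring⟩

/-- The recurrence over `K[z]`, with `z = 1 / y`, satisfied by the reflected polynomials
`z ^ n * t n (1 / z)` when `t n = a 1 * t (n - 1) + ⋯ + a d * t (n - d)` in `K[y]`. -/
noncomputable def reflectedRecurrence (d : ℕ) (a : ℕ → K[X]) : LinearRecurrence K[X] where
  order := d
  coeffs j := (a (d - j)).reflect (d - j)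

lemma reflect_sum {ι : Type*} (s : Finset ι) (f : ι → K[X]) (N : ℕ) :
    (∑ i ∈ s, f i).reflect N = ∑ i ∈ s, (f i).reflect N :=
  map_sum (AddMonoidHom.mk' (reflect N) fun f g ↦ reflect_add f g N) f s

lemma isSolution_reflectedRecurrence {d : ℕ} {a t : ℕ → K[X]}
    (ha : ∀ i ∈ Finset.Icc 1 d, (a i).natDegree ≤ i) (ht : ∀ n, (t n).natDegree ≤ n)
    (hrec : ∀ n, d ≤ n → t n = ∑ i ∈ Finset.Icc 1 d, a i * t (n - i)) :
    (reflectedRecurrence d a).IsSolution fun n ↦ (t n).reflect n := by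
  intro n
  change (t (n + d)).reflect (n + d) =
    ∑ j : Fin d, (a (d - j)).reflect (d - j) * (t (n + j)).reflect (n + j)
  rw [hrec _ (Nat.le_add_left d n), reflect_sum,
    Fin.sum_univ_eq_sum_range (fun j ↦ (a (d - j)).reflect (d - j) * (t (n + j)).reflect (n + j))]
  refine Finset.sum_nbij' (fun i ↦ d - i) (fun j ↦ d - j) ?_ ?_ ?_ ?_ fun i hi ↦ ?_
  iterate 4 simp only [Finset.mem_Icc, Finset.mem_range]; omega
  · obtain ⟨-, hid⟩ := Finset.mem_Icc.1 hi
    rw [show n + d - i = n + (d - i) by omega, Nat.sub_sub_self hid,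
      show n + d = i + (n + (d - i)) by omega, reflect_mul _ _ (ha i hi) (ht _)]

lemma coeff_zero_charPoly_reflectedRecurrence {d : ℕ} (hd : 1 ≤ d) (a : ℕ → K[X]) :
    (reflectedRecurrence d a).charPoly.coeff 0 = -(a d).reflect d := by
  obtain ⟨d, rfl⟩ := Nat.exists_eq_add_of_le' hd
  change (monomial (d + 1) 1 - ∑ j : Fin (d + 1),
    monomial j ((a (d + 1 - j)).reflect (d + 1 - j))).coeff 0 = _
  simp [Fin.sum_univ_succ, coeff_monomial]

theorem exists_coeff_add_mul_pow_eq [Algebra.IsIntegral ℤ K] {p : ℕ} [Fact p.Prime] [CharP K p]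
    {d : ℕ} (hd : 1 ≤ d) {a t : ℕ → K[X]} (ha : ∀ i ∈ Finset.Icc 1 d, (a i).natDegree ≤ i)
    (hu : IsUnit ((a d).coeff d)) (ht : ∀ n, (t n).natDegree ≤ n)
    (hrec : ∀ n, d ≤ n → t n = ∑ i ∈ Finset.Icc 1 d, a i * t (n - i)) :
    ∃ e, 0 < e ∧ ∀ k n j, n + e * p ^ k < j + p ^ k →
      (t (n + e * p ^ k)).coeff j = (X ^ (e * p ^ k) * t n).coeff j := by
  have h0 : IsUnit (((reflectedRecurrence d a).charPoly.coeff 0).coeff 0) := by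
    simpa [coeff_zero_charPoly_reflectedRecurrence hd, coeff_reflect] using hu
  obtain ⟨e, he, W, hW⟩ := exists_charPoly_dvd_X_pow_sub_one_sub (Fact.out : p.Prime).ne_zero
    (CharP.cast_eq_zero K p) (reflectedRecurrence d a) h0
  refine ⟨e, he, fun k n j hj ↦ ?_⟩
  have hdvd := pow_dvd_sub_of_isSolution (isSolution_reflectedRecurrence ha ht hrec) hW k n
  have hshift : (t n).reflect n = (X ^ (e * p ^ k) * t n).reflect (n + e * p ^ k) := by
    rw [add_comm n, reflect_mul _ _ (natDegree_X_pow_le _) (ht n), reflect_monomial,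
      revAt_le le_rfl, Nat.sub_self, pow_zero, one_mul]
  rw [hshift, ← reflect_sub, X_pow_dvd_iff] at hdvd
  rcases le_or_gt j (n + e * p ^ k) with hjn | hjn
  · have := hdvd (n + e * p ^ k - j) (by omega)
    rwa [coeff_reflect, revAt_le (Nat.sub_le _ _), Nat.sub_sub_self hjn, coeff_sub,
      sub_eq_zero] at this
  · rw [coeff_eq_zero_of_natDegree_lt ((ht _).trans_lt hjn), coeff_eq_zero_of_natDegree_lt]
    refine (natDegree_mul_le.trans ?_).trans_lt hjn
    rw [add_comm n]
    exact add_le_add (natDegree_X_pow_le _) (ht n)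

end PolynomialRecurrence

/-- Growth of order at most `n ^ α` for some `α < 1`. The bound is stated with `n + 1` so that it
also makes sense at `n = 0`. -/
def HasPowerSaving (g : ℕ → ℝ) : Prop :=
  ∃ α C : ℝ, 0 ≤ α ∧ α < 1 ∧ 0 < C ∧ ∀ n, g n ≤ C * (n + 1 : ℝ) ^ α

namespace HasPowerSaving

lemma const_mul {g : ℕ → ℝ} (hg : HasPowerSaving g) {r : ℝ} (hr : 0 < r) :
    HasPowerSaving fun n ↦ r * g n := by
  obtain ⟨α, C, hα, hα1, hC, hg⟩ := hg
  refine ⟨α, r * C, hα, hα1, mul_pos hr hC, fun n ↦ ?_⟩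
  rw [mul_assoc]
  exact mul_le_mul_of_nonneg_left (hg n) hr.le

lemma add {g h : ℕ → ℝ} (hg : HasPowerSaving g) (hh : HasPowerSaving h) :
    HasPowerSaving fun n ↦ g n + h n := by
  obtain ⟨α, C, hα, hα1, hC, hg⟩ := hg
  obtain ⟨β, D, -, hβ1, hD, hh⟩ := hh
  refine ⟨max α β, C + D, le_max_of_le_left hα, max_lt hα1 hβ1, by positivity, fun n ↦ ?_⟩
  have hn : (1 : ℝ) ≤ n + 1 := by simp
  calc g n + h n ≤ C * (n + 1 : ℝ) ^ α + D * (n + 1 : ℝ) ^ β := add_le_add (hg n) (hh n)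
    _ ≤ C * (n + 1 : ℝ) ^ max α β + D * (n + 1 : ℝ) ^ max α β := by
      gcongr
      exacts [le_max_left _ _, le_max_right _ _]
    _ = (C + D) * (n + 1 : ℝ) ^ max α β := by ring

lemma exists_nat_bound {g : ℕ → ℝ} (hg : HasPowerSaving g) :
    ∃ κ : ℕ → ℕ, HasPowerSaving (fun n ↦ κ n) ∧ ∀ m n, m ≤ n → g m < κ n := by
  obtain ⟨α, C, hα, hα1, hC, hg⟩ := hg
  refine ⟨fun n ↦ ⌊C * (n + 1 : ℝ) ^ α⌋₊ + 1, ⟨α, C + 1, hα, hα1, by positivity, fun n ↦ ?_⟩,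
    fun m n hmn ↦ ?_⟩
  · have hone : 1 ≤ (n + 1 : ℝ) ^ α := Real.one_le_rpow (by simp) hα
    have hfloor := Nat.floor_le (by positivity : 0 ≤ C * (n + 1 : ℝ) ^ α)
    push_cast
    linarith
  · calc g m ≤ C * (m + 1 : ℝ) ^ α := hg m
      _ ≤ C * (n + 1 : ℝ) ^ α := by gcongr
      _ < _ := by exact_mod_cast Nat.lt_floor_add_one _

lemma exists_le_mul_rpow {g : ℕ → ℝ} (hg : HasPowerSaving g) :
    ∃ α < (1 : ℝ), ∃ C : ℝ, 0 < C ∧ ∀ n : ℕ, 1 ≤ n → g n ≤ C * (n : ℝ) ^ α := by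
  obtain ⟨α, C, hα, hα1, hC, hg⟩ := hg
  refine ⟨α, hα1, C * 2 ^ α, by positivity, fun n hn ↦ (hg n).trans ?_⟩
  have hn' : (1 : ℝ) ≤ n := by exact_mod_cast hn
  rw [mul_assoc, ← Real.mul_rpow zero_le_two (Nat.cast_nonneg n)]
  gcongr
  linarith

end HasPowerSaving

/-- A weight on exponents that decreases along every sequence of polynomials `t` with
`deg (t n) < n` whose top `b ^ k` coefficients repeat under `n ↦ n + e * b ^ k`: the monomials
`X ^ j` of `t n` then satisfy `c j + 1 ≤ c n`. The last two fields are restricted to exponents below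
`e * b ^ (k + 1)`, the scale at which the leading base-`b` digit of `n / e`
has index at most `k`. -/
structure IsContent (e b : ℕ) (c : ℕ → ℝ) : Prop where
  nonneg (n : ℕ) : 0 ≤ c n
  add_one_le {k m n : ℕ} (hn : n < e * b ^ (k + 1)) (hmn : m + b ^ k ≤ n) : c m + 1 ≤ c n
  exists_add_eq (k : ℕ) : ∃ w, ∀ m, m + e * b ^ k < e * b ^ (k + 1) → c (m + e * b ^ k) = c m + w

theorem IsContent.add_one_le_of_coeff_ne_zero {K : Type*} [Semiring K] {e b : ℕ} {c : ℕ → ℝ}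
    (hc : IsContent e b c) (he : 0 < e) (hb : 2 ≤ b) {t : ℕ → K[X]}
    (hdeg : ∀ n, (t n).degree < n)
    (ht : ∀ k n j, n + e * b ^ k < j + b ^ k →
      (t (n + e * b ^ k)).coeff j = (X ^ (e * b ^ k) * t n).coeff j)
    {n j : ℕ} (hj : (t n).coeff j ≠ 0) : c j + 1 ≤ c n := by
  induction n using Nat.strong_induction_on generalizing j with
  | _ n ih =>
  obtain ⟨k, hk⟩ : ∃ k, k = Nat.log b (n / e) := ⟨_, rfl⟩
  have hnk : n < e * b ^ (k + 1) := by
    rw [mul_comm, ← Nat.div_lt_iff_lt_mul he, hk]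
    exact Nat.lt_pow_succ_log_self hb _
  rcases le_or_gt (j + b ^ k) n with hjk | hjk
  · exact hc.add_one_le hnk hjk
  -- Now `j` is one of the top `b ^ k` degrees, where `t n` is a translate of `t (n - e * b ^ k)`.
  have hjn : j < n := Nat.cast_lt.1 ((le_degree_of_ne_zero hj).trans_lt (hdeg n))
  have hkn : e * b ^ k ≤ n := by
    rw [mul_comm, ← Nat.le_div_iff_mul_le he, hk]
    refine Nat.pow_log_le_self b fun h ↦ ?_
    rw [hk, h, Nat.log_zero_right, pow_zero] at hjk
    omega
  obtain ⟨m, rfl⟩ := Nat.exists_eq_add_of_le' hkn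
  rw [ht k m j hjk, coeff_X_pow_mul', ne_eq, ite_eq_right_iff, Classical.not_imp] at hj
  obtain ⟨hkj, hj⟩ := hj
  obtain ⟨i, rfl⟩ := Nat.exists_eq_add_of_le' hkj
  rw [Nat.add_sub_cancel] at hj
  have hpos : 0 < e * b ^ k := by positivity
  obtain ⟨w, hw⟩ := hc.exists_add_eq k
  rw [hw i (by omega), hw m hnk]
  linarith [ih m (by omega) hj]

section DigitContent

variable {e b : ℕ}

lemma ofDigits_digits_eq_mod_add {S : Type*} [CommSemiring S] (β : S) (hb : 2 ≤ b) (n : ℕ) :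
    Nat.ofDigits β (b.digits n) = (n % b : ℕ) + β * Nat.ofDigits β (b.digits (n / b)) := by
  rcases Nat.eq_zero_or_pos n with rfl | hn
  · simp [Nat.ofDigits]
  · rw [Nat.digits_def' hb hn]
    rfl

lemma ofDigits_digits_eq_mod_pow_add {S : Type*} [CommSemiring S] (β : S) (hb : 2 ≤ b) (k n : ℕ) :
    Nat.ofDigits β (b.digits n) =
      Nat.ofDigits β (b.digits (n % b ^ k)) + β ^ k * Nat.ofDigits β (b.digits (n / b ^ k)) := by
  induction k generalizing n with
  | zero => simp [Nat.mod_one, Nat.ofDigits]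
  | succ k ih =>
    have hmod : n % b ^ (k + 1) % b = n % b := Nat.mod_mod_of_dvd _ (dvd_pow_self _ k.succ_ne_zero)
    have hdiv : n % b ^ (k + 1) / b = n / b % b ^ k := by
      rw [pow_succ', Nat.mod_mul_right_div_self]
    rw [ofDigits_digits_eq_mod_add β hb n, ih (n / b), ofDigits_digits_eq_mod_add β hb (n % _),
      hmod, hdiv, Nat.div_div_eq_div_mul, ← pow_succ', pow_succ' β]
    ring

/-- The value at `β` of the base-`b` expansion of `n` in units of `e`: if
`n = r + e * ∑ i, dᵢ * b ^ i` with `r < e` and `dᵢ < b`, this is `r + e * ∑ i, dᵢ * β ^ i`. For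
`β < b` close to `b` it supplies weights of power-saving growth. -/
def digitContent (e b : ℕ) (β : ℝ) (n : ℕ) : ℝ :=
  (n % e : ℕ) + e * Nat.ofDigits β (b.digits (n / e))

lemma digitContent_eq_mod_add (β : ℝ) (hb : 2 ≤ b) {k n : ℕ} (hn : n < e * b ^ (k + 1)) :
    digitContent e b β n =
      digitContent e b β (n % (e * b ^ k)) + e * β ^ k * (n / (e * b ^ k) : ℕ) := by
  have hdigit : n / e / b ^ k < b := by
    rw [Nat.div_div_eq_div_mul]
    exact Nat.div_lt_of_lt_mul (by rwa [mul_assoc, ← pow_succ])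
  simp only [digitContent]
  rw [Nat.mod_mul_right_mod, Nat.mod_mul_right_div_self, ← Nat.div_div_eq_div_mul,
    ofDigits_digits_eq_mod_pow_add β hb k (n / e),
    ofDigits_digits_eq_mod_add β hb (n / e / b ^ k), Nat.div_eq_of_lt hdigit,
    Nat.mod_eq_of_lt hdigit, Nat.digits_zero]
  simp only [Nat.ofDigits]
  ring

lemma digitContent_add_mul_pow (β : ℝ) (he : 0 < e) (hb : 2 ≤ b) {k m : ℕ}
    (hm : m + e * b ^ k < e * b ^ (k + 1)) :
    digitContent e b β (m + e * b ^ k) = digitContent e b β m + e * β ^ k := by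
  have hpos : 0 < e * b ^ k := by positivity
  rw [digitContent_eq_mod_add β hb hm, digitContent_eq_mod_add (k := k) β hb (by omega : m < _),
    Nat.add_mod_right, Nat.add_div_right _ hpos]
  push_cast
  ring

theorem digitContent_mem_Icc {γ ε : ℝ} (he : 0 < e) (hb : 2 ≤ b) (hγ0 : 0 ≤ γ) (hγ1 : γ ≤ 1)
    (hε : 0 ≤ ε) (h : e * b * (1 - γ) ≤ ε * (γ * b - 1)) {k n : ℕ} (hn : n < e * b ^ k) :
    digitContent e b (γ * b) n ∈ Set.Icc (n * γ ^ k) (n * γ ^ k + ε * (γ * b) ^ k) := by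
  induction k generalizing n with
  | zero =>
    rw [pow_zero, mul_one] at hn
    simpa [digitContent, Nat.div_eq_of_lt hn, Nat.mod_eq_of_lt hn, Nat.ofDigits] using hε
  | succ k ih =>
    obtain ⟨hlower, hupper⟩ := ih (Nat.mod_lt n (by positivity : 0 < e * b ^ k))
    have hn' : (n : ℝ) ≤ e * b ^ (k + 1) := by exact_mod_cast hn.le
    have htop : e * (γ * b) ^ k * (n / (e * b ^ k) : ℕ) =
        n * γ ^ k - (n % (e * b ^ k) : ℕ) * γ ^ k := by
      have hdiv : ((n / (e * b ^ k) : ℕ) : ℝ) * (e * b ^ k) + (n % (e * b ^ k) : ℕ) = n := by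
        exact_mod_cast Nat.div_add_mod' n (e * b ^ k)
      rw [mul_pow]
      linear_combination γ ^ k * hdiv
    rw [digitContent_eq_mod_add _ hb hn, htop]
    have hsplit : (n : ℝ) * γ ^ (k + 1) = n * γ ^ k - n * γ ^ k * (1 - γ) := by ring
    have hpos : 0 ≤ (n : ℝ) * γ ^ k * (1 - γ) := mul_nonneg (by positivity) (by linarith)
    have hloss : (n : ℝ) * γ ^ k * (1 - γ) ≤ ε * (γ * b) ^ (k + 1) - ε * (γ * b) ^ k :=
      calc (n : ℝ) * γ ^ k * (1 - γ) ≤ (e * b ^ (k + 1)) * γ ^ k * (1 - γ) := by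
            have : 0 ≤ 1 - γ := by linarith
            gcongr
        _ = (γ * b) ^ k * (e * b * (1 - γ)) := by rw [mul_pow]; ring
        _ ≤ (γ * b) ^ k * (ε * (γ * b - 1)) := by gcongr
        _ = _ := by ring
    constructor <;> linarith

lemma isContent_digitContent {γ ε δ : ℝ} (he : 0 < e) (hb : 2 ≤ b) (hγ1 : γ ≤ 1)
    (hε : 0 ≤ ε) (hγb : 1 ≤ γ * b) (h : e * b * (1 - γ) ≤ ε * (γ * b - 1))
    (hδ : 0 < δ) (hδε : δ ≤ γ * (1 - ε * b)) :
    IsContent e b fun n ↦ δ⁻¹ * digitContent e b (γ * b) n := by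
  have hb0 : (0 : ℝ) < b := by positivity
  have hγ0 : 0 ≤ γ := (pos_of_mul_pos_left (one_pos.trans_le hγb) hb0.le).le
  refine ⟨fun n ↦ ?_, fun {k m n} hn hmn ↦ ?_, fun k ↦ ⟨δ⁻¹ * (e * (γ * b) ^ k), fun m hm ↦ ?_⟩⟩
  · have hn : n < e * b ^ n := (Nat.lt_pow_self hb).trans_le (Nat.le_mul_of_pos_left _ he)
    have := (digitContent_mem_Icc he hb hγ0 hγ1 hε h hn).1
    have : 0 ≤ n * γ ^ n := by positivity
    exact mul_nonneg (inv_nonneg.2 hδ.le) (by linarith)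
  · have hm : m < e * b ^ (k + 1) := by omega
    have hupper := (digitContent_mem_Icc he hb hγ0 hγ1 hε h hm).2
    have hlower := (digitContent_mem_Icc he hb hγ0 hγ1 hε h hn).1
    have hgap : δ ≤ digitContent e b (γ * b) n - digitContent e b (γ * b) m :=
      calc δ ≤ 1 * δ := by rw [one_mul]
        _ ≤ (γ * b) ^ k * (γ * (1 - ε * b)) := by
          gcongr
          exact one_le_pow₀ hγb
        _ = (m + b ^ k : ℝ) * γ ^ (k + 1) - (m * γ ^ (k + 1) + ε * (γ * b) ^ (k + 1)) := by ring
        _ ≤ n * γ ^ (k + 1) - (m * γ ^ (k + 1) + ε * (γ * b) ^ (k + 1)) := by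
          gcongr
          exact_mod_cast hmn
        _ ≤ _ := sub_le_sub hlower hupper
    rw [← inv_mul_cancel₀ hδ.ne', ← le_sub_iff_add_le', ← mul_sub]
    gcongr
  · rw [digitContent_add_mul_pow _ he hb hm, mul_add]

lemma hasPowerSaving_digitContent {γ ε : ℝ} (he : 0 < e) (hb : 2 ≤ b) (hγ1 : γ < 1)
    (hε : 0 ≤ ε) (hγb : 1 ≤ γ * b) (h : e * b * (1 - γ) ≤ ε * (γ * b - 1)) :
    HasPowerSaving (digitContent e b (γ * b)) := by
  have hb1 : (1 : ℝ) < b := by exact_mod_cast hb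
  have hγ0 : 0 ≤ γ := (pos_of_mul_pos_left (one_pos.trans_le hγb) (by linarith)).le
  refine ⟨Real.logb b (γ * b), (e + ε) * (γ * b), Real.logb_nonneg hb1 hγb, ?_, by positivity,
    fun n ↦ ?_⟩
  · rw [Real.logb_lt_iff_lt_rpow hb1 (by linarith), Real.rpow_one]
    exact mul_lt_of_lt_one_left (by linarith) hγ1
  obtain ⟨l, hl⟩ : ∃ l, l = Nat.log b (n + 1) := ⟨_, rfl⟩
  have hn : n < e * b ^ (l + 1) := by
    have := Nat.lt_pow_succ_log_self hb (n + 1)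
    rw [← hl] at this
    exact (n.lt_succ_self.trans this).trans_le (Nat.le_mul_of_pos_left _ he)
  have hn' : (n : ℝ) ≤ e * b ^ (l + 1) := by exact_mod_cast hn.le
  calc digitContent e b (γ * b) n ≤ n * γ ^ (l + 1) + ε * (γ * b) ^ (l + 1) :=
        (digitContent_mem_Icc he hb hγ0 hγ1.le hε h hn).2
    _ ≤ (e * b ^ (l + 1)) * γ ^ (l + 1) + ε * (γ * b) ^ (l + 1) := by gcongr
    _ = (e + ε) * (γ * b) * (γ * b) ^ l := by ring
    _ = (e + ε) * (γ * b) * ((b : ℝ) ^ l) ^ Real.logb b (γ * b) := by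
      rw [← Real.rpow_natCast_mul (by positivity), mul_comm (l : ℝ),
        Real.rpow_mul_natCast (by positivity), Real.rpow_logb (by linarith) hb1.ne' (by linarith)]
    _ ≤ (e + ε) * (γ * b) * (n + 1 : ℝ) ^ Real.logb b (γ * b) := by
      gcongr
      · exact Real.logb_nonneg hb1 hγb
      · exact_mod_cast hl ▸ Nat.pow_log_le_self b n.succ_ne_zero

theorem exists_isContent (he : 0 < e) (hb : 2 ≤ b) : ∃ c, IsContent e b c ∧ HasPowerSaving c := by
  have he' : (1 : ℝ) ≤ e := by exact_mod_cast he
  have hb' : (2 : ℝ) ≤ b := by exact_mod_cast hb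
  -- With `ε * b = 1 / 2` half of each gap survives; then `γ` is chosen so that the error
  -- `e * b * (1 - γ)` equals `ε / 2`, leaving `γ * b ≥ 3 / 2` as the only requirement.
  obtain ⟨γ, hγ⟩ : ∃ γ : ℝ, γ = 1 - 1 / (4 * e * b ^ 2) := ⟨_, rfl⟩
  obtain ⟨ε, hε⟩ : ∃ ε : ℝ, ε = 1 / (2 * b) := ⟨_, rfl⟩
  have hε0 : 0 ≤ ε := by rw [hε]; positivity
  have hεb : ε * b = 1 / 2 := by rw [hε]; field_simp
  have hγ1 : γ < 1 := by rw [hγ]; exact sub_lt_self _ (by positivity)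
  have hγ34 : 3 / 4 ≤ γ := by
    have : 1 / (4 * e * (b : ℝ) ^ 2) ≤ 1 / 4 :=
      one_div_le_one_div_of_le (by norm_num) (by nlinarith)
    linarith
  have hγb : 3 / 2 ≤ γ * b := by nlinarith
  have h : e * b * (1 - γ) ≤ ε * (γ * b - 1) :=
    calc e * b * (1 - γ) = ε * (1 / 2) := by rw [hγ, hε]; field_simp; norm_num
      _ ≤ ε * (γ * b - 1) := mul_le_mul_of_nonneg_left (by linarith) hε0
  refine ⟨_, isContent_digitContent he hb hγ1.le hε0 (by linarith) h (δ := 1 / 4) (by norm_num)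
    (by rw [hεb]; linarith),
    (hasPowerSaving_digitContent he hb hγ1 hε0 (by linarith) h).const_mul (by norm_num)⟩

end DigitContent

theorem exists_weight_of_recurrence {K : Type*} [CommRing K] [Algebra.IsIntegral ℤ K] {p : ℕ}
    [Fact p.Prime] [CharP K p] {d : ℕ} (hd : 1 ≤ d) {a t : ℕ → K[X]}
    (ha : ∀ i ∈ Finset.Icc 1 d, (a i).natDegree ≤ i) (hu : IsUnit ((a d).coeff d))
    (ht : ∀ n, (t n).degree < n)
    (hrec : ∀ n, d ≤ n → t n = ∑ i ∈ Finset.Icc 1 d, a i * t (n - i)) :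
    ∃ c : ℕ → ℝ, HasPowerSaving c ∧ (∀ n, 0 ≤ c n) ∧
      ∀ n j, (t n).coeff j ≠ 0 → c j + 1 ≤ c n := by
  obtain ⟨e, he, hper⟩ := exists_coeff_add_mul_pow_eq (p := p) hd ha hu
    (fun n ↦ natDegree_le_of_degree_le (ht n).le) hrec
  have hp : 2 ≤ p := (Fact.out : p.Prime).two_le
  obtain ⟨c, hc, hgrowth⟩ := exists_isContent he hp
  exact ⟨c, hgrowth, hc.nonneg, fun n j ↦ hc.add_one_le_of_coeff_ne_zero he hp ht hper⟩

section Operator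

variable {R : Type*} [CommRing R] {T : Module.End R R[X]}

/-- `T` is nilpotent modulo `I` at a sublinear rate: `κ n` iterates of `T` bring the coefficients of
every polynomial of degree at most `n` into `I`, where `κ` has power-saving growth. Requiring the
image to stay in degree at most `n` makes the notion multiplicative in `I`. -/
def SublinearlyNilpotentMod (T : Module.End R R[X]) (I : Ideal R) : Prop :=
  ∃ κ : ℕ → ℕ, HasPowerSaving (fun n ↦ κ n) ∧
    ∀ n : ℕ, (degreeLE R n).map (T ^ κ n) ≤ I • degreeLE R n

lemma sublinearlyNilpotentMod_top : SublinearlyNilpotentMod T ⊤ :=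
  ⟨0, ⟨0, 1, le_rfl, one_pos, one_pos, by simp⟩, by simp [Module.End.one_eq_id]⟩

lemma SublinearlyNilpotentMod.mul {I J : Ideal R} (hI : SublinearlyNilpotentMod T I)
    (hJ : SublinearlyNilpotentMod T J) : SublinearlyNilpotentMod T (I * J) := by
  obtain ⟨κ, hκ, hI⟩ := hI
  obtain ⟨μ, hμ, hJ⟩ := hJ
  refine ⟨κ + μ, by simpa using hκ.add hμ, fun n ↦ ?_⟩
  calc (degreeLE R n).map (T ^ (κ n + μ n))
      = ((degreeLE R n).map (T ^ κ n)).map (T ^ μ n) := by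
        rw [add_comm, pow_add, Module.End.mul_eq_comp, Submodule.map_comp]
    _ ≤ (I • degreeLE R n).map (T ^ μ n) := Submodule.map_mono (hI n)
    _ = I • (degreeLE R n).map (T ^ μ n) := Submodule.map_smul'' _ _ _
    _ ≤ I • J • degreeLE R n := Submodule.smul_mono le_rfl (hJ n)
    _ = (I * J) • degreeLE R n := (Submodule.mul_smul _ _ _).symm

lemma sublinearlyNilpotentMod_span_natCast
    (h : ∀ p : ℕ, p.Prime → SublinearlyNilpotentMod T (Ideal.span {(p : R)})) {m : ℕ}
    (hm : m ≠ 0) : SublinearlyNilpotentMod T (Ideal.span {(m : R)}) := by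
  induction m using induction_on_primes with
  | zero => exact absurd rfl hm
  | one =>
    rw [Nat.cast_one, Ideal.span_singleton_one]
    exact sublinearlyNilpotentMod_top
  | prime_mul p m hp ih =>
    rw [Nat.cast_mul, ← Ideal.span_singleton_mul_span_singleton]
    exact (h p hp).mul (ih (right_ne_zero_of_mul hm))

lemma degree_apply_X_pow_lt (hT : ∀ f, f ≠ 0 → (T f).degree < f.degree) (n : ℕ) :
    (T (X ^ n)).degree < n := by
  rcases eq_or_ne (X ^ n : R[X]) 0 with h | h
  · simp [h]
  · exact (hT _ h).trans_le (degree_X_pow_le n)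

lemma pow_apply_mem_degreeLE (hT : ∀ f, f ≠ 0 → (T f).degree < f.degree) (k : ℕ) {n : ℕ} {f : R[X]}
    (hf : f ∈ degreeLE R n) : (T ^ k) f ∈ degreeLE R n := by
  induction k with
  | zero => exact hf
  | succ k ih =>
    rw [pow_succ', Module.End.mul_apply]
    rcases eq_or_ne ((T ^ k) f) 0 with h | h
    · simp [h]
    · exact mem_degreeLE.2 ((hT _ h).le.trans (mem_degreeLE.1 ih))

lemma pow_apply_X_pow_mem_smul (hT : ∀ f, f ≠ 0 → (T f).degree < f.degree) {I : Ideal R}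
    {c : ℕ → ℝ} (hc : ∀ n, 0 ≤ c n) (hstep : ∀ n j, (T (X ^ n)).coeff j ∉ I → c j + 1 ≤ c n)
    {k i n : ℕ} (hin : i ≤ n) (hk : c i < k) : (T ^ k) (X ^ i) ∈ I • degreeLE R n := by
  induction k generalizing i with
  | zero => exact absurd hk (by simpa using hc i)
  | succ k ih =>
    rw [pow_succ, Module.End.mul_apply, (T (X ^ i)).as_sum_support, map_sum]
    refine Submodule.sum_mem _ fun j hj ↦ ?_
    have hji : j < i := Nat.cast_lt.1
      ((le_degree_of_mem_supp j hj).trans_lt (degree_apply_X_pow_lt hT i))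
    rw [← C_mul_X_pow_eq_monomial, ← smul_eq_C_mul, map_smul]
    by_cases hjI : (T (X ^ i)).coeff j ∈ I
    · refine Submodule.smul_mem_smul hjI (pow_apply_mem_degreeLE hT k (mem_degreeLE.2 ?_))
      exact (degree_X_pow_le j).trans (by exact_mod_cast hji.le.trans hin)
    · refine Submodule.smul_mem _ _ (ih (hji.le.trans hin) ?_)
      have := hstep i j hjI
      push_cast at hk
      linarith

lemma sublinearlyNilpotentMod_of_weight (hT : ∀ f, f ≠ 0 → (T f).degree < f.degree) {I : Ideal R}
    {c : ℕ → ℝ} (hgrowth : HasPowerSaving c) (hc : ∀ n, 0 ≤ c n)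
    (hstep : ∀ n j, (T (X ^ n)).coeff j ∉ I → c j + 1 ≤ c n) : SublinearlyNilpotentMod T I := by
  obtain ⟨κ, hκ, hcκ⟩ := hgrowth.exists_nat_bound
  refine ⟨κ, hκ, fun n ↦ ?_⟩
  classical
  rw [Submodule.map_le_iff_le_comap, degreeLE_eq_span_X_pow, Submodule.span_le]
  intro f hf
  obtain ⟨i, hi, rfl⟩ := Finset.mem_image.1 (Finset.mem_coe.1 hf)
  have hin : i ≤ n := Nat.le_of_lt_succ (Finset.mem_range.1 hi)
  rw [← degreeLE_eq_span_X_pow]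
  exact pow_apply_X_pow_mem_smul hT hc hstep hin (hcκ i n hin)

lemma sublinearlyNilpotentMod_ker [Algebra.IsIntegral ℤ R]
    (hT : ∀ f, f ≠ 0 → (T f).degree < f.degree) {d : ℕ} (hd : 1 ≤ d) {a : ℕ → R[X]}
    (ha : ∀ i ∈ Finset.Icc 1 d, (a i).natDegree ≤ i) (hu : IsUnit ((a d).coeff d))
    (hrec : ∀ n, d ≤ n → T (X ^ n) = ∑ i ∈ Finset.Icc 1 d, a i * T (X ^ (n - i)))
    {p : ℕ} [Fact p.Prime] {K : Type*} [CommRing K] [CharP K p] {π : R →+* K}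
    (hπ : Function.Surjective π) : SublinearlyNilpotentMod T (RingHom.ker π) := by
  have : Algebra.IsIntegral ℤ K := Algebra.IsIntegral.of_surjective π.toIntAlgHom hπ
  obtain ⟨c, hgrowth, hc, hstep⟩ := exists_weight_of_recurrence (p := p) (a := fun i ↦ (a i).map π)
    (t := fun n ↦ (T (X ^ n)).map π) hd (fun i hi ↦ natDegree_map_le.trans (ha i hi))
    (by simpa using hu.map π) (fun n ↦ degree_map_le.trans_lt (degree_apply_X_pow_lt hT n))
    fun n hn ↦ by simp [hrec n hn, Polynomial.map_sum]
  refine sublinearlyNilpotentMod_of_weight hT hgrowth hc fun n j hj ↦ hstep n j ?_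
  rwa [coeff_map, ne_eq, ← RingHom.mem_ker]

lemma sublinearlyNilpotentMod_span_prime [Algebra.IsIntegral ℤ R]
    (hT : ∀ f, f ≠ 0 → (T f).degree < f.degree) {d : ℕ} (hd : 1 ≤ d) {a : ℕ → R[X]}
    (ha : ∀ i ∈ Finset.Icc 1 d, (a i).natDegree ≤ i) (hu : IsUnit ((a d).coeff d))
    (hrec : ∀ n, d ≤ n → T (X ^ n) = ∑ i ∈ Finset.Icc 1 d, a i * T (X ^ (n - i)))
    {p : ℕ} (hp : p.Prime) : SublinearlyNilpotentMod T (Ideal.span {(p : R)}) := by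
  by_cases hunit : IsUnit (p : R)
  · rw [Ideal.span_singleton_eq_top.2 hunit]
    exact sublinearlyNilpotentMod_top
  have : Fact p.Prime := ⟨hp⟩
  have : CharP (R ⧸ Ideal.span {(p : R)}) p := CharP.quotient R p hunit
  rw [← Ideal.mk_ker (I := Ideal.span {(p : R)})]
  exact sublinearlyNilpotentMod_ker hT hd ha hu hrec (p := p) Ideal.Quotient.mk_surjective

end Operator

lemma nilpIndex_le_of_pow_apply_eq_zero {R : Type} [CommRing R] {T : Module.End R R[X]}
    {f : R[X]} {k : ℕ} (h : (T ^ k) f = 0) : nilpIndex T f ≤ k := by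
  refine csSup_le' fun l hl ↦ le_of_not_ge fun hkl ↦ hl ?_
  rw [← Nat.sub_add_cancel hkl, pow_add, Module.End.mul_apply, h, map_zero]

theorem stmt0_general {R : Type} [CommRing R] [Algebra.IsIntegral ℤ R] (hR : ringChar R ≠ 0)
    (T : Module.End R R[X]) (h1 : ∀ f : R[X], f ≠ 0 → (T f).degree < f.degree)
    (d : ℕ) (hd : 1 ≤ d) (a : ℕ → R[X])
    (h2deg : ∀ i ∈ Finset.Icc 1 d, (a i).degree ≤ (i : WithBot ℕ))
    (h2rec : ∀ n, d ≤ n → T (X ^ n) = ∑ i ∈ Finset.Icc 1 d, a i * T (X ^ (n - i)))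
    (h3 : IsUnit ((a d).coeff d)) :
    ∃ α : ℝ, α < 1 ∧ ∃ C : ℝ, 0 < C ∧ ∀ n : ℕ, 1 ≤ n → ∀ f : R[X], f.degree ≤ n →
      (nilpIndex T f : ℝ) ≤ C * (n : ℝ) ^ α := by
  obtain ⟨κ, hκ, hnil⟩ := sublinearlyNilpotentMod_span_natCast
    (fun _ ↦ sublinearlyNilpotentMod_span_prime h1 hd
      (fun i hi ↦ natDegree_le_of_degree_le (h2deg i hi)) h3 h2rec) hR
  rw [ringChar.Nat.cast_ringChar, Ideal.span_singleton_zero] at hnil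
  obtain ⟨α, hα, C, hC, hbound⟩ := hκ.exists_le_mul_rpow
  refine ⟨α, hα, C, hC, fun n hn f hf ↦ le_trans ?_ (hbound n hn)⟩
  have hzero : (T ^ κ n) f = 0 := by
    simpa using hnil n (Submodule.mem_map_of_mem (mem_degreeLE.2 hf))
  exact_mod_cast nilpIndex_le_of_pow_apply_eq_zero hzero

/-- **Nilpotence Growth Theorem.** -/
theorem stmt0 {R : Type} [CommRing R] [Fintype R]
    (T : Module.End R (Polynomial R))
    (h1 : ∀ f : Polynomial R, f ≠ 0 → (T f).degree < f.degree)
    (d : ℕ) (hd : 1 ≤ d) (a : ℕ → Polynomial R)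
    (h2deg : ∀ i ∈ Finset.Icc 1 d, (a i).degree ≤ (i : WithBot ℕ))
    (h2rec : ∀ n, d ≤ n →
      T ((X : Polynomial R) ^ n) = ∑ i ∈ Finset.Icc 1 d, a i * T (X ^ (n - i)))
    (h3 : IsUnit ((a d).coeff d)) :
    ∃ α : ℝ, α < 1 ∧ ∃ C : ℝ, 0 < C ∧ ∀ n : ℕ, 1 ≤ n →
      (nilpIndex T (X ^ n) : ℝ) ≤ C * (n : ℝ) ^ α := by
  obtain ⟨α, hα, C, hC, hbound⟩ := stmt0_general (CharP.ringChar_ne_zero_of_finite R) T h1 d hd a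
    h2deg h2rec h3
  exact ⟨α, hα, C, hC, fun n hn ↦ hbound n hn _ (degree_X_pow_le n)⟩
end

section
/- Suppose that for every finite field F and every F-linear operator T : F[y] → F[y] satisfying (1) deg T(f) < deg f for every nonzero f ∈ F[y], (2) there exist d ≥ 1 and a_1, …, a_d ∈ F[y] with deg a_i ≤ i such that T(y^n) = a_1·T(y^{n−1}) + ⋯ + a_d·T(y^{n−d}) for all n ≥ d, and (3) the coefficient of y^d in a_d is nonzero, there exist a real α < 1 and C > 0 with N_T(y^n) ≤ C·n^α for all n ≥ 1. Then the same conclusion holds for every finite commutative ring R and every R-linear operator T : R[y] → R[y] satisfying (1), (2), and (3) with 'nonzero' strengthened to 'a unit of R'. -/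
open Polynomial

/-!
Some finite product of prime ideals of a Noetherian ring vanishes, so it suffices to bound, for
each of these primes `P`, the number of steps after which the iterates of `T` map the polynomials
of degree at most `n` into those with coefficients in `P`. Such bounds add: if `T ^ k` sends a
submodule `V` into `I • V` and `T ^ l` sends it into `J • V`, then `T ^ (k + l)` sends it into
`(I * J) • V` by linearity. Since `T ^ k` maps into `P` exactly when the `k`-th power of the
operator induced on `(R ⧸ P)[X]` vanishes, the bound for `P` is the growth theorem over `R ⧸ P`,
and this quotient is a finite field when `R` is finite.
-/

/-- Growth at most a power of `n` with exponent less than `1`. As in the growth theorem, the value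
at `0` is unconstrained, and negative exponents are allowed. -/
def IsPowerSublinear (u : ℕ → ℕ) : Prop :=
  ∃ α : ℝ, α < 1 ∧ ∃ C : ℝ, 0 < C ∧ ∀ n : ℕ, 1 ≤ n → (u n : ℝ) ≤ C * (n : ℝ) ^ α

namespace IsPowerSublinear

lemma const (c : ℕ) : IsPowerSublinear fun _ => c :=
  ⟨0, zero_lt_one, c + 1, by positivity, fun n _ => by simp⟩

variable {u v : ℕ → ℕ}

lemma mono (hv : IsPowerSublinear v) (huv : u ≤ v) : IsPowerSublinear u := by
  obtain ⟨α, hα, C, hC, hbound⟩ := hv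
  exact ⟨α, hα, C, hC, fun n hn => (Nat.cast_le.mpr (huv n)).trans (hbound n hn)⟩

lemma add (hu : IsPowerSublinear u) (hv : IsPowerSublinear v) : IsPowerSublinear (u + v) := by
  obtain ⟨α, hα, C, hC, hboundu⟩ := hu
  obtain ⟨β, hβ, D, hD, hboundv⟩ := hv
  refine ⟨max α β, max_lt hα hβ, C + D, add_pos hC hD, fun n hn => ?_⟩
  have hn' : (1 : ℝ) ≤ n := Nat.one_le_cast.mpr hn
  calc ((u n + v n : ℕ) : ℝ) = u n + v n := Nat.cast_add _ _
    _ ≤ C * (n : ℝ) ^ α + D * (n : ℝ) ^ β := add_le_add (hboundu n hn) (hboundv n hn)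
    _ ≤ C * (n : ℝ) ^ max α β + D * (n : ℝ) ^ max α β := by
      gcongr
      · exact le_max_left α β
      · exact le_max_right α β
    _ = (C + D) * (n : ℝ) ^ max α β := (add_mul _ _ _).symm

lemma partialSups (hu : IsPowerSublinear u) : IsPowerSublinear (partialSups u) := by
  obtain ⟨α, hα, C, hC, hbound⟩ := hu
  refine ⟨max α 0, max_lt hα zero_lt_one, C + u 0, by positivity, fun n hn => ?_⟩
  obtain ⟨j, hjn, hj⟩ := exists_partialSups_eq u n
  have hn' : (1 : ℝ) ≤ n := Nat.one_le_cast.mpr hn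
  have hone : 1 ≤ (n : ℝ) ^ max α 0 := Real.one_le_rpow hn' (le_max_right _ _)
  rw [hj, add_mul]
  rcases j.eq_zero_or_pos with rfl | hj0
  · exact le_add_of_nonneg_of_le (by positivity) (le_mul_of_one_le_right (by positivity) hone)
  · have hj1 : (1 : ℝ) ≤ j := Nat.one_le_cast.mpr hj0
    refine le_add_of_le_of_nonneg ?_ (by positivity)
    calc (u j : ℝ) ≤ C * (j : ℝ) ^ α := hbound j hj0
      _ ≤ C * (j : ℝ) ^ max α 0 := by gcongr; exact le_max_left _ _
      _ ≤ C * (n : ℝ) ^ max α 0 := by gcongr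

end IsPowerSublinear

section Submodule

variable {R : Type*} [CommRing R]

lemma map_pow_add_le_mul_smul {M : Type*} [AddCommGroup M] [Module R M] {T : Module.End R M}
    {V : Submodule R M} {I J : Ideal R} {k l : ℕ} (hI : V.map (T ^ k) ≤ I • V)
    (hJ : V.map (T ^ l) ≤ J • V) : V.map (T ^ (k + l)) ≤ (I * J) • V :=
  calc V.map (T ^ (k + l)) = (V.map (T ^ k)).map (T ^ l) := by
        rw [add_comm, pow_add, Module.End.mul_eq_comp, Submodule.map_comp]
    _ ≤ (I • V).map (T ^ l) := Submodule.map_mono hI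
    _ = I • V.map (T ^ l) := Submodule.map_smul'' I V (T ^ l)
    _ ≤ I • J • V := smul_mono_right I hJ
    _ = (I * J) • V := (Submodule.mul_smul I J V).symm

lemma mem_smul_degreeLE {I : Ideal R} {n : ℕ} {f : R[X]} (hf : f.degree ≤ n)
    (hI : ∀ i, f.coeff i ∈ I) : f ∈ I • degreeLE R n := by
  rw [f.as_sum_range' (n + 1) (Nat.lt_succ_of_le (natDegree_le_of_degree_le hf))]
  refine Submodule.sum_mem _ fun i hi => ?_
  rw [← smul_X_eq_monomial]
  refine Submodule.smul_mem_smul (hI i) (mem_degreeLE.mpr ((degree_X_pow_le i).trans ?_))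
  exact Nat.cast_le.mpr (Finset.mem_range_succ_iff.mp hi)

lemma apply_eq_zero_of_degree_le {M : Type*} [AddCommGroup M] [Module R M] {T : R[X] →ₗ[R] M}
    {n : ℕ} (hT : ∀ j ≤ n, T (X ^ j) = 0) {f : R[X]} (hf : f.degree ≤ n) : T f = 0 := by
  classical
  suffices h : degreeLE R n ≤ LinearMap.ker T from h (mem_degreeLE.mpr hf)
  rw [degreeLE_eq_span_X_pow, Submodule.span_le]
  intro g hg
  obtain ⟨j, hj, rfl⟩ := Finset.mem_image.mp hg
  exact hT j (Finset.mem_range_succ_iff.mp hj)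

end Submodule

/-- Operators on `R[X]` that strictly lower the degree of every nonzero polynomial. -/
def IsDegreeLowering {R : Type*} [CommRing R] (T : Module.End R R[X]) : Prop :=
  ∀ f : R[X], f ≠ 0 → (T f).degree < f.degree

namespace IsDegreeLowering

section

variable {R : Type*} [CommRing R] {T : Module.End R R[X]}

lemma degree_pow_apply_le (hT : IsDegreeLowering T) (k : ℕ) (f : R[X]) :
    ((T ^ k) f).degree ≤ f.degree := by
  induction k with
  | zero => exact le_rfl
  | succ k ih =>
    rw [pow_succ', Module.End.mul_apply]
    by_cases h0 : (T ^ k) f = 0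
    · simp [h0]
    · exact (hT _ h0).le.trans ih

lemma pow_apply_eq_zero_of_degree_lt (hT : IsDegreeLowering T) {k : ℕ} {f : R[X]}
    (hf : f.degree < k) : (T ^ k) f = 0 := by
  induction k generalizing f with
  | zero => simpa [Nat.WithBot.lt_zero_iff] using hf
  | succ k ih =>
    rw [pow_succ, Module.End.mul_apply]
    by_cases h0 : f = 0
    · rw [h0, map_zero, map_zero]
    · have hfk : f.degree ≤ k := natDegree_le_iff_degree_le.mp
        (Nat.le_of_lt_succ ((natDegree_lt_iff_degree_lt h0).mpr hf))
      exact ih ((hT f h0).trans_le hfk)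

end

lemma pow_apply_eq_zero_of_nilpIndex_lt {R : Type} [CommRing R] {T : Module.End R R[X]}
    (hT : IsDegreeLowering T) {k : ℕ} {f : R[X]} (hk : nilpIndex T f < k) : (T ^ k) f = 0 := by
  have hbdd : BddAbove {k : ℕ | (T ^ k) f ≠ 0} := by
    refine ⟨f.natDegree, fun m hm => ?_⟩
    by_contra! hlt
    exact hm (hT.pow_apply_eq_zero_of_degree_lt
      (degree_le_natDegree.trans_lt (Nat.cast_lt.mpr hlt)))
  exact not_not.mp (notMem_of_csSup_lt hk hbdd)

end IsDegreeLowering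

section InducedEnd

variable {R S : Type*} [CommRing R] [CommRing S] {φ : R →+* S} {T : Module.End R R[X]}

/-- The operator on `S[X]` induced by `T` along `φ : R →+* S`: the `S`-linear extension of
`X ^ n ↦ φ (T (X ^ n))`. For `φ` the quotient map by an ideal this is the reduction of `T`. -/
noncomputable def inducedEnd (φ : R →+* S) (T : Module.End R R[X]) : Module.End S S[X] :=
  (basisMonomials S).constr S fun n => (T (X ^ n)).map φ

lemma inducedEnd_X_pow (n : ℕ) : inducedEnd φ T (X ^ n) = (T (X ^ n)).map φ := by
  have hbasis : (X : S[X]) ^ n = basisMonomials S n := by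
    simp only [coe_basisMonomials, monomial_one_right_eq_X_pow]
  rw [hbasis, inducedEnd, Module.Basis.constr_basis]

lemma inducedEnd_map (f : R[X]) : inducedEnd φ T (f.map φ) = (T f).map φ := by
  induction f using Polynomial.induction_on' with
  | add p q hp hq => simp only [Polynomial.map_add, map_add, hp, hq]
  | monomial n a =>
    rw [map_monomial, ← smul_X_eq_monomial, ← smul_X_eq_monomial, map_smul, map_smul,
      inducedEnd_X_pow, Polynomial.map_smul]

lemma inducedEnd_pow_map (k : ℕ) (f : R[X]) :
    (inducedEnd φ T ^ k) (f.map φ) = ((T ^ k) f).map φ := by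
  have hsemiconj : Function.Semiconj (Polynomial.map φ) T (inducedEnd φ T) :=
    fun g => (inducedEnd_map g).symm
  rw [Module.End.pow_apply, Module.End.pow_apply]
  exact (hsemiconj.iterate_right k f).symm

lemma IsDegreeLowering.inducedEnd (hφ : Function.Surjective φ) (hT : IsDegreeLowering T) :
    IsDegreeLowering (inducedEnd φ T) := by
  intro f hf
  obtain ⟨g, rfl, hg⟩ := exists_degree_eq_of_mem_lifts ((mem_lifts f).mpr (map_surjective φ hφ f))
  have hg0 : g ≠ 0 := by
    rintro rfl
    exact hf (Polynomial.map_zero φ)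
  rw [inducedEnd_map, ← hg]
  exact degree_map_le.trans_lt (hT g hg0)

end InducedEnd

/-- Polynomials of degree at most `n` acquire coefficients in `I` after a number of steps of `T`
that is sublinear in `n`, without their degree exceeding `n`. -/
def SublinearlyMapsInto {R : Type*} [CommRing R] (T : Module.End R R[X]) (I : Ideal R) : Prop :=
  ∃ u : ℕ → ℕ, IsPowerSublinear u ∧
    ∀ n : ℕ, (degreeLE R n).map (T ^ u n) ≤ I • degreeLE R n

namespace SublinearlyMapsInto

section

variable {R : Type*} [CommRing R] {T : Module.End R R[X]} {I J : Ideal R}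

lemma one (T : Module.End R R[X]) : SublinearlyMapsInto T 1 := by
  refine ⟨fun _ => 0, .const 0, fun n => ?_⟩
  rw [pow_zero, Module.End.one_eq_id, Submodule.map_id, Submodule.one_smul]

lemma mono (hI : SublinearlyMapsInto T I) (hIJ : I ≤ J) : SublinearlyMapsInto T J := by
  obtain ⟨u, hu, hmap⟩ := hI
  exact ⟨u, hu, fun n => (hmap n).trans (Submodule.smul_mono_left hIJ)⟩

lemma mul (hI : SublinearlyMapsInto T I) (hJ : SublinearlyMapsInto T J) :
    SublinearlyMapsInto T (I * J) := by
  obtain ⟨u, hu, hmapI⟩ := hI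
  obtain ⟨v, hv, hmapJ⟩ := hJ
  exact ⟨u + v, hu.add hv, fun n => map_pow_add_le_mul_smul (hmapI n) (hmapJ n)⟩

lemma bot_of_forall_isMinimalPrime [IsNoetherianRing R]
    (h : ∀ P : Ideal R, IsMinimalPrime P → SublinearlyMapsInto T P) : SublinearlyMapsInto T ⊥ := by
  obtain ⟨Z, hZ⟩ := PrimeSpectrum.exists_primeSpectrum_prod_le R ⊥
  refine mono (Multiset.prod_induction (SublinearlyMapsInto T) _ (fun _ _ => mul) (one T)
    fun I hI => ?_) hZ
  obtain ⟨Q, -, rfl⟩ := Multiset.mem_map.mp hI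
  obtain ⟨P, hP, hPQ⟩ := Ideal.exists_minimalPrimes_le (bot_le : ⊥ ≤ Q.asIdeal)
  exact (h P hP).mono hPQ

end

variable {R : Type} [CommRing R] {T : Module.End R R[X]}

lemma isPowerSublinear_nilpIndex (h : SublinearlyMapsInto T ⊥) :
    IsPowerSublinear fun n => nilpIndex T (X ^ n) := by
  obtain ⟨u, hu, hmap⟩ := h
  refine hu.mono fun n => csSup_le' fun k hk => ?_
  have hzero : (T ^ u n) (X ^ n) = 0 := by
    have hmem := hmap n (Submodule.mem_map_of_mem (mem_degreeLE.mpr (degree_X_pow_le n)))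
    rwa [Submodule.bot_smul, Submodule.mem_bot] at hmem
  by_contra! hlt
  exact hk (Module.End.pow_map_zero_of_le hlt.le hzero)

lemma ker_of_nilpIndex {S : Type} [CommRing S] {φ : R →+* S} (hφ : Function.Surjective φ)
    (hT : IsDegreeLowering T)
    (h : IsPowerSublinear fun n => nilpIndex (inducedEnd φ T) (X ^ n)) :
    SublinearlyMapsInto T (RingHom.ker φ) := by
  set N : ℕ → ℕ := fun n => nilpIndex (inducedEnd φ T) (X ^ n)
  refine ⟨⇑(partialSups N) + fun _ => 1, h.partialSups.add (.const 1), fun n => ?_⟩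
  rintro _ ⟨f, hf, rfl⟩
  have hfn : f.degree ≤ n := mem_degreeLE.mp hf
  refine mem_smul_degreeLE ((hT.degree_pow_apply_le _ f).trans hfn) fun i => ?_
  have hX : ∀ j ≤ n, (inducedEnd φ T ^ (partialSups N n + 1)) (X ^ j) = 0 := fun j hj =>
    (hT.inducedEnd hφ).pow_apply_eq_zero_of_nilpIndex_lt
      (Nat.lt_succ_of_le (le_partialSups_of_le N hj))
  have hzero : ((T ^ (partialSups N n + 1)) f).map φ = 0 := by
    rw [← inducedEnd_pow_map]
    exact apply_eq_zero_of_degree_le hX (degree_map_le.trans hfn)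
  rw [RingHom.mem_ker, ← coeff_map]
  exact (congrArg (coeff · i) hzero).trans (coeff_zero i)

end SublinearlyMapsInto

/-- The Nilpotence Growth Theorem holds over `R`: every degree-lowering operator satisfying a
recursion of order `d` as in the theorem, with `(a d).coeff d` a unit, has nilpotence index
`nilpIndex T (X ^ n)` bounded by a sublinear power of `n`. -/
def NilpotenceGrowth (R : Type) [CommRing R] : Prop :=
  ∀ T : Module.End R R[X], IsDegreeLowering T →
    ∀ d : ℕ, 1 ≤ d → ∀ a : ℕ → R[X],
      (∀ i ∈ Finset.Icc 1 d, (a i).degree ≤ (i : WithBot ℕ)) →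
      (∀ n, d ≤ n → T (X ^ n) = ∑ i ∈ Finset.Icc 1 d, a i * T (X ^ (n - i))) →
      IsUnit ((a d).coeff d) →
      IsPowerSublinear fun n => nilpIndex T (X ^ n)

theorem stmt1_general {R : Type} [CommRing R] [IsNoetherianRing R]
    (H : ∀ P : Ideal R, IsMinimalPrime P → NilpotenceGrowth (R ⧸ P)) : NilpotenceGrowth R := by
  intro T hT d hd a ha hrec hunit
  refine (SublinearlyMapsInto.bot_of_forall_isMinimalPrime
    fun P hP => ?_).isPowerSublinear_nilpIndex
  have hsurj := Ideal.Quotient.mk_surjective (I := P)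
  rw [← Ideal.mk_ker (I := P)]
  refine .ker_of_nilpIndex hsurj hT (H P hP _ (hT.inducedEnd hsurj) d hd
    (fun i => (a i).map (Ideal.Quotient.mk P)) (fun i hi => degree_map_le.trans (ha i hi))
    (fun n hn => ?_) ?_)
  · simp only [inducedEnd_X_pow, hrec n hn, Polynomial.map_sum, Polynomial.map_mul]
  · rw [coeff_map]
    exact hunit.map _

/-- Reduction of the Nilpotence Growth Theorem from finite fields to finite rings. -/
theorem stmt1
    (H : ∀ (F : Type) [Field F] [Fintype F] (T : Module.End F (Polynomial F)),
      (∀ f : Polynomial F, f ≠ 0 → (T f).degree < f.degree) →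
      ∀ d : ℕ, 1 ≤ d → ∀ a : ℕ → Polynomial F,
        (∀ i ∈ Finset.Icc 1 d, (a i).degree ≤ (i : WithBot ℕ)) →
        (∀ n, d ≤ n →
          T ((X : Polynomial F) ^ n) = ∑ i ∈ Finset.Icc 1 d, a i * T (X ^ (n - i))) →
        (a d).coeff d ≠ 0 →
        ∃ α : ℝ, α < 1 ∧ ∃ C : ℝ, 0 < C ∧ ∀ n : ℕ, 1 ≤ n →
          (nilpIndex T (X ^ n) : ℝ) ≤ C * (n : ℝ) ^ α) :
    ∀ (R : Type) [CommRing R] [Fintype R] (T : Module.End R (Polynomial R)),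
      (∀ f : Polynomial R, f ≠ 0 → (T f).degree < f.degree) →
      ∀ d : ℕ, 1 ≤ d → ∀ a : ℕ → Polynomial R,
        (∀ i ∈ Finset.Icc 1 d, (a i).degree ≤ (i : WithBot ℕ)) →
        (∀ n, d ≤ n →
          T ((X : Polynomial R) ^ n) = ∑ i ∈ Finset.Icc 1 d, a i * T (X ^ (n - i))) →
        IsUnit ((a d).coeff d) →
        ∃ α : ℝ, α < 1 ∧ ∃ C : ℝ, 0 < C ∧ ∀ n : ℕ, 1 ≤ n →
          (nilpIndex T (X ^ n) : ℝ) ≤ C * (n : ℝ) ^ α := by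
  intro R _ _
  refine stmt1_general fun P hP T hT d hd a ha hrec hunit => ?_
  have : P.IsMaximal := hP.isPrime.isMaximal'
  let : Field (R ⧸ P) := Ideal.Quotient.field P
  let : Fintype (R ⧸ P) := Fintype.ofFinite _
  exact H (R ⧸ P) T hT d hd a ha hrec hunit.ne_zero
end

section
/- Let F be a finite field, let h ∈ F[X] be a monic polynomial with h(0) ≠ 0, let L be a splitting field of h over F, and let q be the cardinality of L. If m ≥ 0 is an integer such that for every root α of h in L the multiplicity of α as a root of h is at most q^m, then h divides X^{q^m·(q−1)} − 1 in F[X]. -/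
open Polynomial

/-!
In characteristic `p`, the identity `X ^ (p ^ k * n) - 1 = (X ^ n - 1) ^ p ^ k` shows that every
`n`-th root of unity is a root of the left-hand side of multiplicity at least `p ^ k`. In a field
with `q` elements every nonzero element is a root of unity of order dividing `q - 1`, so comparing
multiplicities gives the divisibility over `L`, and divisibility descends along field extensions.
-/

theorem dvd_pow_of_splits_of_rootMultiplicity_le {K : Type*} [Field K] {f g : K[X]} {N : ℕ}
    (hsplits : f.Splits) (hf : f ≠ 0) (hroot : ∀ α, f.IsRoot α → g.IsRoot α)
    (hmult : ∀ α, f.IsRoot α → f.rootMultiplicity α ≤ N) : f ∣ g ^ N := by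
  classical
  by_cases hgN : g ^ N = 0
  · exact hgN ▸ dvd_zero f
  refine hsplits.dvd_of_roots_le_roots hf (Multiset.le_iff_count.mpr fun α => ?_)
  rw [count_roots, count_roots]
  by_cases hα : f.IsRoot α
  · have hdvd : (X - C α) ^ N ∣ g ^ N := pow_dvd_pow_of_dvd (dvd_iff_isRoot.mpr (hroot α hα)) N
    exact (hmult α hα).trans ((le_rootMultiplicity_iff hgN).mpr hdvd)
  · exact (rootMultiplicity_eq_zero hα).trans_le (Nat.zero_le _)

theorem pow_expChar_pow_mul_sub_one {R : Type*} [CommRing R] (p : ℕ) [ExpChar R p] (x : R)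
    (k n : ℕ) : x ^ (p ^ k * n) - 1 = (x ^ n - 1) ^ p ^ k := by
  rw [sub_pow_expChar_pow, one_pow, mul_comm, pow_mul]

theorem dvd_X_pow_expChar_pow_mul_sub_one {F L : Type*} [Field F] [Field L] [Algebra F L]
    (p : ℕ) [ExpChar L p] {h : F[X]} (hh : h ≠ 0) (hsplits : (h.map (algebraMap F L)).Splits)
    {k n : ℕ} (hroot : ∀ α : L, aeval α h = 0 → α ^ n = 1)
    (hmult : ∀ α : L, aeval α h = 0 → (h.map (algebraMap F L)).rootMultiplicity α ≤ p ^ k) :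
    h ∣ X ^ (p ^ k * n) - 1 := by
  have isRoot_iff (α : L) : (h.map (algebraMap F L)).IsRoot α ↔ aeval α h = 0 := by
    rw [IsRoot, eval_map_algebraMap]
  have hdvd : h.map (algebraMap F L) ∣ (X ^ n - 1) ^ p ^ k := by
    refine dvd_pow_of_splits_of_rootMultiplicity_le hsplits (map_ne_zero hh) (fun α hα => ?_)
      fun α hα => hmult α ((isRoot_iff α).mp hα)
    simp [hroot α ((isRoot_iff α).mp hα)]
  rw [← map_dvd_map' (algebraMap F L)]
  simpa only [Polynomial.map_sub, Polynomial.map_pow, map_X, Polynomial.map_one,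
    pow_expChar_pow_mul_sub_one p] using hdvd

theorem ne_zero_of_aeval_eq_zero_of_eval_zero_ne_zero {R A : Type*} [CommSemiring R] [Semiring A]
    [Algebra R A] [FaithfulSMul R A] {f : R[X]} (hf : f.eval 0 ≠ 0) {α : A}
    (hα : aeval α f = 0) : α ≠ 0 := by
  rintro rfl
  rw [← coeff_zero_eq_aeval_zero', FaithfulSMul.algebraMap_eq_zero_iff,
    coeff_zero_eq_eval_zero] at hα
  exact hf hα

theorem exists_expChar_card_pow_eq (K : Type*) [Field K] [Fintype K] (m : ℕ) :
    ∃ p k : ℕ, ExpChar K p ∧ Fintype.card K ^ m = p ^ k := by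
  obtain ⟨p, _, r, hp, hcard⟩ := FiniteField.card' K
  exact ⟨p, r * m, .prime hp, by rw [hcard, pow_mul]⟩

theorem stmt6_general {F L : Type*} [Field F] [Field L] [Fintype L] [Algebra F L]
    (p : ℕ) [ExpChar L p] (h : F[X]) (h0 : h.eval 0 ≠ 0)
    (hsplits : (h.map (algebraMap F L)).Splits) (k : ℕ)
    (hmult : ∀ α : L, aeval α h = 0 → (h.map (algebraMap F L)).rootMultiplicity α ≤ p ^ k) :
    h ∣ X ^ (p ^ k * (Fintype.card L - 1)) - 1 := by
  have hh : h ≠ 0 := by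
    rintro rfl
    exact h0 eval_zero
  have hroot (α : L) (hα : aeval α h = 0) : α ^ (Fintype.card L - 1) = 1 :=
    FiniteField.pow_card_sub_one_eq_one α (ne_zero_of_aeval_eq_zero_of_eval_zero_ne_zero h0 hα)
  exact dvd_X_pow_expChar_pow_mul_sub_one p hh hsplits hroot hmult

/-- If `h` is monic over a finite field `F` with `h(0) ≠ 0`, `L` is a splitting field of `h`
of cardinality `q`, and every root of `h` in `L` has multiplicity at most `q^m`,
then `h` divides `X^{q^m·(q−1)} − 1`. -/
theorem stmt6 {F L : Type} [Field F] [Fintype F] [Field L] [Fintype L] [Algebra F L]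
    (h : Polynomial F) (hmonic : h.Monic) (h0 : h.eval 0 ≠ 0)
    [Polynomial.IsSplittingField F L h]
    (m : ℕ)
    (hmult : ∀ α : L, aeval α h = 0 →
      (h.map (algebraMap F L)).rootMultiplicity α ≤ (Fintype.card L) ^ m) :
    h ∣ X ^ ((Fintype.card L) ^ m * (Fintype.card L - 1)) - 1 := by
  obtain ⟨p, k, _, hpk⟩ := exists_expChar_card_pow_eq L m
  rw [hpk] at hmult ⊢
  exact stmt6_general p h h0 (IsSplittingField.splits L h) k hmult
end

section
/- Let p be a prime, R a commutative ring of characteristic p, and let d ≥ D ≥ 1 be integers. Let T : R[y] → R[y] be an R-linear operator with deg T(f) < deg f for every nonzero f, such that there exist a ∈ R and c_1, …, c_d ∈ R[y] with deg c_i ≤ i − D for 1 ≤ i ≤ d−1 and c_d = a·y^d + r, deg r ≤ d − D, satisfying T(y^n) = −( c_1·T(y^{n−1}) + ⋯ + c_d·T(y^{n−d}) ) for all n ≥ d. Let b be a power of p with b ≥ d. Suppose c : ℕ → ℚ_{≥0} and a positive integer M satisfy: (discreteness) M·c(n) ∈ ℕ for all n; (base property) 0 = c(0) < c(1) < ⋯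 < c(d−1) and c(d−D) < c(d); (step property) for every k ≥ 0, every pair (i,j) with either (i,j) = (d,d) or 0 ≤ j and j + D ≤ i ≤ d, and all integers n, m with d·b^k ≤ n < d·b^{k+1} and j·b^k ≤ m, one has c(n) − c(n − i·b^k) ≥ c(m) − c(m − j·b^k). Then N_T(y^n) ≤ M·c(n) for all n. -/
open Polynomial

/-!
The sequence `T (X ^ n)` is annihilated by the characteristic polynomial of its recursion, evaluated
at the shift, hence also by the `q`-th power of that polynomial. When `q` is a power of `p`, this is
again a recursion: each coefficient `cᵢ` becomes `cᵢ ^ q`, and each shift by `i` a shift by `i * q`.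
If `d * q ≤ n < d * q * b` with `q = b ^ k`, then every exponent `m` of `T (X ^ n)` therefore has
the form `m = j * q + v`, where `j` is an exponent of `cᵢ` and `v` is an exponent of
`T (X ^ (n - i * q))`. By induction `c v < c (n - i * q)`, and the step property turns this into
`c m < c n`. So `T` strictly lowers the weight `c`; as `M * c` takes natural values, each
application of `T` lowers it by at least one.
-/

section LinearRecurrence

variable {A V : Type*} [CommRing A] [AddCommGroup V] [Module A V]
  {d q : ℕ} {c : ℕ → A} {s : ℕ → V}

/-- The linear recurrence of order `d` with coefficients `c 1, …, c d`, all of whose shifts are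
multiplied by `q`. The case `q = 1` is an ordinary linear recurrence, and the sign follows the
convention that `X ^ d + c 1 * X ^ (d - 1) + ⋯ + c d` is its characteristic polynomial. -/
def IsDilatedRecurrence (d q : ℕ) (c : ℕ → A) (s : ℕ → V) : Prop :=
  ∀ n, d * q ≤ n → s n = -∑ i ∈ Finset.Icc 1 d, c i • s (n - i * q)

/-- The characteristic polynomial of a linear recurrence, used to express the recurrence as
annihilation by a polynomial in the shift operator. -/
noncomputable def recurrencePoly (d : ℕ) (c : ℕ → A) : A[X] :=
  X ^ d + ∑ i ∈ Finset.Icc 1 d, C (c i) * X ^ (d - i)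

variable (A V) in
/-- The left shift operator on sequences, which makes sequences a module over polynomials. -/
def sequenceShift : Module.End A (ℕ → V) :=
  LinearMap.funLeft A V Nat.succ

theorem sequenceShift_pow_apply (k : ℕ) (s : ℕ → V) (n : ℕ) :
    (sequenceShift A V ^ k) s n = s (n + k) := by
  induction k generalizing s with
  | zero => rfl
  | succ k ih =>
    rw [pow_succ, Module.End.mul_apply, ih]
    rfl

theorem aeval_sequenceShift_pow_recurrencePoly (d q : ℕ) (c : ℕ → A) (s : ℕ → V) (n : ℕ) :
    aeval (sequenceShift A V ^ q) (recurrencePoly d c) s n =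
      s (n + d * q) + ∑ i ∈ Finset.Icc 1 d, c i • s (n + d * q - i * q) := by
  simp only [recurrencePoly, map_add, map_sum, map_mul, map_pow, aeval_X, aeval_C, ← pow_mul,
    LinearMap.add_apply, LinearMap.sum_apply, Module.End.mul_apply, Pi.add_apply,
    Finset.sum_apply, sequenceShift_pow_apply, Module.algebraMap_end_apply, Pi.smul_apply]
  rw [mul_comm q d]
  congr 1
  refine Finset.sum_congr rfl fun i hi => ?_
  rw [mul_comm q, Nat.sub_mul,
    Nat.add_sub_assoc (Nat.mul_le_mul_right q (Finset.mem_Icc.1 hi).2)]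

theorem isDilatedRecurrence_iff_aeval_eq_zero :
    IsDilatedRecurrence d q c s ↔
      aeval (sequenceShift A V ^ q) (recurrencePoly d c) s = 0 := by
  simp only [funext_iff, aeval_sequenceShift_pow_recurrencePoly, Pi.zero_apply,
    ← eq_neg_iff_add_eq_zero]
  refine ⟨fun hs n => hs _ (Nat.le_add_left _ _), fun hs n hn => ?_⟩
  simpa only [Nat.sub_add_cancel hn] using hs (n - d * q)

theorem recurrencePoly_pow_expChar_pow (p : ℕ) [ExpChar A p] (d e : ℕ) (c : ℕ → A) :
    recurrencePoly d c ^ p ^ e = expand A (p ^ e) (recurrencePoly d fun i => c i ^ p ^ e) := by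
  simp only [← map_iterateFrobenius_expand p, map_expand, recurrencePoly, Polynomial.map_add,
    Polynomial.map_sum, Polynomial.map_mul, Polynomial.map_pow, map_X, map_C,
    iterateFrobenius_def]

theorem IsDilatedRecurrence.pow_expChar_pow (p : ℕ) [ExpChar A p]
    (hs : IsDilatedRecurrence d q c s) (e : ℕ) :
    IsDilatedRecurrence d (q * p ^ e) (fun i => c i ^ p ^ e) s := by
  rw [isDilatedRecurrence_iff_aeval_eq_zero] at hs ⊢
  rw [pow_mul, ← expand_aeval, ← recurrencePoly_pow_expChar_pow,
    ← Nat.sub_one_add_one (expChar_pow_pos A p e).ne', pow_succ, map_mul, Module.End.mul_apply,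
    hs, map_zero]

theorem IsDilatedRecurrence.eq_zero (hs : IsDilatedRecurrence d 1 c s)
    (hinit : ∀ n < d, s n = 0) (n : ℕ) : s n = 0 := by
  induction n using Nat.strong_induction_on with
  | _ n ih =>
    rcases lt_or_ge n d with hn | hn
    · exact hinit n hn
    · rw [hs n (by rwa [mul_one]), neg_eq_zero]
      refine Finset.sum_eq_zero fun i hi => ?_
      obtain ⟨hi_pos, hid⟩ := Finset.mem_Icc.1 hi
      rw [ih (n - i * 1) (by omega), smul_zero]

end LinearRecurrence

section Support

theorem exists_mem_support_of_mem_support_mul {R : Type*} [Semiring R] {f g : R[X]} {m : ℕ}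
    (hm : m ∈ (f * g).support) :
    ∃ u ∈ f.support, ∃ v ∈ g.support, u + v = m := by
  rw [mem_support_iff, coeff_mul] at hm
  obtain ⟨⟨u, v⟩, huv, hne⟩ := Finset.exists_ne_zero_of_sum_ne_zero hm
  exact ⟨u, mem_support_iff.2 (left_ne_zero_of_mul hne), v,
    mem_support_iff.2 (right_ne_zero_of_mul hne),
    Finset.HasAntidiagonal.mem_antidiagonal.1 huv⟩

theorem exists_mem_support_of_mem_support_pow_expChar_pow {R : Type*} [CommSemiring R] (p : ℕ)
    [ExpChar R p] {f : R[X]} {e m : ℕ} (hm : m ∈ (f ^ p ^ e).support) :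
    ∃ j ∈ f.support, j * p ^ e = m := by
  rw [← map_iterateFrobenius_expand p] at hm
  have hm' := support_map_subset _ _ hm
  rw [mem_support_iff, coeff_expand (expChar_pow_pos R p e)] at hm'
  split_ifs at hm' with hdvd
  · exact ⟨m / p ^ e, mem_support_iff.2 hm', Nat.div_mul_cancel hdvd⟩
  · exact absurd rfl hm'

theorem exists_mem_support_of_mem_support_map {R : Type*} [Semiring R] {T : R[X] →ₗ[R] R[X]}
    {f : R[X]} {m : ℕ} (hm : m ∈ (T f).support) : ∃ n ∈ f.support, m ∈ (T (X ^ n)).support := by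
  have hf : T f = ∑ n ∈ f.support, f.coeff n • T (X ^ n) := by
    conv_lhs => rw [f.as_sum_support_C_mul_X_pow]
    simp only [map_sum, C_mul', map_smul]
  rw [hf, mem_support_iff, finsetSum_coeff] at hm
  obtain ⟨n, hn, hne⟩ := Finset.exists_ne_zero_of_sum_ne_zero hm
  rw [coeff_smul, smul_eq_mul] at hne
  exact ⟨n, hn, mem_support_iff.2 (right_ne_zero_of_mul hne)⟩

theorem IsDilatedRecurrence.exists_mem_support {R : Type*} [CommRing R] (p : ℕ) [ExpChar R p]
    {d e n m : ℕ} {c s : ℕ → R[X]} (hs : IsDilatedRecurrence d 1 c s) (hn : d * p ^ e ≤ n)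
    (hm : m ∈ (s n).support) :
    ∃ i ∈ Finset.Icc 1 d, ∃ j ∈ (c i).support, ∃ v ∈ (s (n - i * p ^ e)).support,
      j * p ^ e + v = m := by
  have hdeep := hs.pow_expChar_pow p e
  rw [one_mul] at hdeep
  rw [hdeep n hn, support_neg, mem_support_iff, finsetSum_coeff] at hm
  obtain ⟨i, hi, hne⟩ := Finset.exists_ne_zero_of_sum_ne_zero hm
  obtain ⟨u, hu, v, hv, huv⟩ := exists_mem_support_of_mem_support_mul (mem_support_iff.2 hne)
  obtain ⟨j, hj, rfl⟩ := exists_mem_support_of_mem_support_pow_expChar_pow p hu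
  exact ⟨i, hi, j, hj, v, hv, huv⟩

end Support

/-- `T` strictly lowers the weight `w` if every exponent of `T (X ^ n)` has weight below `w n`;
this is the notion of a triangular operator that the nilpotence bound rests on. -/
def LowersWeight {R ι : Type*} [Semiring R] [LT ι] (T : Module.End R R[X]) (w : ℕ → ι) : Prop :=
  ∀ n, ∀ m ∈ (T (X ^ n)).support, w m < w n

section NilpotenceIndex

theorem LowersWeight.le_sup_of_pow_apply_ne_zero {R : Type*} [Semiring R]
    {T : Module.End R R[X]} {w : ℕ → ℕ} (hT : LowersWeight T w) {k : ℕ} {f : R[X]}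
    (hf : (T ^ k) f ≠ 0) : k ≤ f.support.sup w := by
  induction k generalizing f with
  | zero => exact Nat.zero_le _
  | succ k ih =>
    rw [pow_succ, Module.End.mul_apply] at hf
    have hTf : (T f).support.Nonempty := by
      rw [support_nonempty]
      intro h
      exact hf (by rw [h, map_zero])
    obtain ⟨m, hm, hsup⟩ := Finset.exists_mem_eq_sup _ hTf w
    obtain ⟨n, hn, hmn⟩ := exists_mem_support_of_mem_support_map hm
    calc k + 1 ≤ w m + 1 := Nat.succ_le_succ ((ih hf).trans_eq hsup)
      _ ≤ w n := hT n m hmn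
      _ ≤ f.support.sup w := Finset.le_sup hn

theorem LowersWeight.nilpIndex_le {R : Type} [CommRing R] {T : Module.End R R[X]} {w : ℕ → ℕ}
    (hT : LowersWeight T w) (f : R[X]) : nilpIndex T f ≤ f.support.sup w :=
  csSup_le' fun _ hk => hT.le_sup_of_pow_apply_ne_zero hk

theorem LowersWeight.nilpIndex_X_pow_le {R : Type} [CommRing R] {T : Module.End R R[X]}
    {w : ℕ → ℕ} (hT : LowersWeight T w) (n : ℕ) : nilpIndex T (X ^ n) ≤ w n := by
  have hsupp : (X ^ n : R[X]).support ⊆ {n} := by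
    rw [X_pow_eq_monomial]
    exact support_monomial_subset n 1
  exact (hT.nilpIndex_le _).trans ((Finset.sup_mono hsupp).trans_eq Finset.sup_singleton)

end NilpotenceIndex

theorem exists_mul_pow_le_lt_mul_pow {b d n : ℕ} (hb : 1 < b) (hd : 0 < d) (hn : d ≤ n) :
    ∃ k, d * b ^ k ≤ n ∧ n < d * b ^ (k + 1) := by
  obtain ⟨k, hle, hlt⟩ := exists_nat_pow_near (Nat.div_pos hn hd) hb
  exact ⟨k, mul_comm d _ ▸ (Nat.le_div_iff_mul_le hd).1 hle,
    mul_comm d _ ▸ (Nat.div_lt_iff_lt_mul hd).1 hlt⟩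

/-- The step property of a weight `c` in base `b`, for the recursion of order `d` with polynomial
coefficients `cp`: it is imposed on those pairs `(i, j)` for which `y ^ j` occurs in `cp i`. -/
def StepProperty {R Γ : Type*} [Semiring R] [AddCommGroup Γ] [LE Γ] (b d : ℕ) (cp : ℕ → R[X])
    (c : ℕ → Γ) : Prop :=
  ∀ k, ∀ i ∈ Finset.Icc 1 d, ∀ j ∈ (cp i).support, ∀ n m, d * b ^ k ≤ n →
    n < d * b ^ (k + 1) → j * b ^ k ≤ m → c m - c (m - j * b ^ k) ≤ c n - c (n - i * b ^ k)

section RecursionOperator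

theorem degree_map_X_pow_lt {R : Type*} [Semiring R] [Nontrivial R] {T : Module.End R R[X]}
    (hT : ∀ f : R[X], f ≠ 0 → (T f).degree < f.degree) (n : ℕ) : (T (X ^ n)).degree < n :=
  (hT _ (monic_X_pow n).ne_zero).trans_eq (degree_X_pow n)

theorem eq_and_eq_or_add_le_of_mem_support {R : Type*} [Semiring R] {d D : ℕ} (hDd : D ≤ d)
    {cp : ℕ → R[X]} {a : R} {r : R[X]}
    (hci : ∀ i, 1 ≤ i → i ≤ d - 1 → ∀ k : ℕ, (cp i).coeff k ≠ 0 → (k : ℤ) ≤ (i : ℤ) - D)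
    (hcd : cp d = C a * X ^ d + r) (hr : r.degree ≤ ((d - D : ℕ) : WithBot ℕ))
    {i j : ℕ} (hi : i ∈ Finset.Icc 1 d) (hj : j ∈ (cp i).support) :
    (i = d ∧ j = d) ∨ (j + D ≤ i ∧ i ≤ d) := by
  obtain ⟨hi_pos, hid⟩ := Finset.mem_Icc.1 hi
  rw [mem_support_iff] at hj
  rcases hid.lt_or_eq with hlt | rfl
  · have := hci i hi_pos (by omega) j hj
    omega
  · by_cases hji : j = i
    · exact Or.inl ⟨rfl, hji⟩
    · rw [hcd, coeff_add, coeff_C_mul_X_pow, if_neg hji, zero_add] at hj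
      have : j ≤ i - D := by exact_mod_cast (le_degree_of_ne_zero hj).trans hr
      omega

variable {R Γ : Type*} [CommRing R] {d : ℕ} {T : Module.End R R[X]} {cp : ℕ → R[X]}

theorem lowersWeight_of_order_le_one [LT Γ] (hd : d ≤ 1)
    (hdeg : ∀ n < d, (T (X ^ n)).degree < n)
    (hrec : IsDilatedRecurrence d 1 cp fun n => T (X ^ n)) (c : ℕ → Γ) : LowersWeight T c := by
  have hinit : ∀ n < d, T (X ^ n) = 0 := by
    intro n hn
    obtain rfl : n = 0 := by omega
    simpa only [Nat.cast_zero, Nat.WithBot.lt_zero_iff, degree_eq_bot] using hdeg 0 hn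
  intro n m hm
  rw [hrec.eq_zero hinit n, support_zero] at hm
  exact absurd hm (Finset.notMem_empty m)

theorem lowersWeight_of_stepProperty [AddCommGroup Γ] [PartialOrder Γ] [IsOrderedAddMonoid Γ]
    (p : ℕ) [ExpChar R p] {b : ℕ} (hb : ∃ l, b = p ^ l) (hb_one : 1 < b) (hd : 0 < d)
    (hdeg : ∀ n < d, (T (X ^ n)).degree < n)
    (hrec : IsDilatedRecurrence d 1 cp fun n => T (X ^ n)) {c : ℕ → Γ}
    (hbase : StrictMonoOn c (Set.Iio d)) (hstep : StepProperty b d cp c) : LowersWeight T c := by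
  obtain ⟨l, rfl⟩ := hb
  intro n
  induction n using Nat.strong_induction_on with
  | _ n ih =>
    intro m hm
    rcases lt_or_ge n d with hnd | hdn
    · have hmn : m < n := by
        exact_mod_cast (le_degree_of_mem_supp m hm).trans_lt (hdeg n hnd)
      exact hbase (hmn.trans hnd) hnd hmn
    obtain ⟨k, hle, hlt⟩ := exists_mul_pow_le_lt_mul_pow hb_one hd hdn
    simp only [StepProperty, ← pow_mul] at hstep hle hlt
    obtain ⟨i, hi, j, hj, v, hv, rfl⟩ := hrec.exists_mem_support p hle hm
    have hshift : 0 < i * p ^ (l * k) :=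
      Nat.mul_pos (Finset.mem_Icc.1 hi).1 (expChar_pow_pos R p _)
    have hcv : c v < c (n - i * p ^ (l * k)) := ih _ (by omega) v hv
    have hcm := hstep k i hi j hj n _ hle hlt (Nat.le_add_right _ v)
    rw [Nat.add_sub_cancel_left] at hcm
    calc c (j * p ^ (l * k) + v) = c (j * p ^ (l * k) + v) - c v + c v :=
          (sub_add_cancel _ _).symm
      _ < c n - c (n - i * p ^ (l * k)) + c (n - i * p ^ (l * k)) :=
          add_lt_add_of_le_of_lt hcm hcv
      _ = c n := sub_add_cancel _ _

end RecursionOperator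

theorem stmt7_general (p : ℕ) (hp : p.Prime) {R : Type} [CommRing R] [CharP R p]
    (d : ℕ) (T : Module.End R R[X]) (hdeg : ∀ n < d, (T (X ^ n)).degree < n)
    (cp : ℕ → R[X])
    (hrec : ∀ n, d ≤ n → T (X ^ n) = -∑ i ∈ Finset.Icc 1 d, cp i * T (X ^ (n - i)))
    (b : ℕ) (hb : ∃ k : ℕ, b = p ^ k) (hbd : d ≤ 1 ∨ 1 < b)
    (c : ℕ → ℚ) (M : ℕ) (hM : 0 < M) (hdisc : ∀ n : ℕ, ∃ m : ℕ, (M : ℚ) * c n = m)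
    (hbase : StrictMonoOn c (Set.Iio d)) (hstep : StepProperty b d cp c) (n : ℕ) :
    (nilpIndex T (X ^ n) : ℚ) ≤ (M : ℚ) * c n := by
  have : Fact p.Prime := ⟨hp⟩
  have hrec' : IsDilatedRecurrence d 1 cp fun n => T (X ^ n) := by
    simpa only [IsDilatedRecurrence, mul_one, smul_eq_mul] using hrec
  have hc : LowersWeight T c := by
    rcases le_or_gt d 1 with hd | hd
    · exact lowersWeight_of_order_le_one hd hdeg hrec' c
    · exact lowersWeight_of_stepProperty p hb (hbd.resolve_left hd.not_ge) (by omega) hdeg hrec'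
        hbase hstep
  choose w hw using hdisc
  have hwT : LowersWeight T w := by
    intro n m hm
    have : (M : ℚ) * c m < M * c n := mul_lt_mul_of_pos_left (hc n m hm) (by exact_mod_cast hM)
    rw [hw, hw] at this
    exact_mod_cast this
  rw [hw n]
  exact_mod_cast hwT.nilpIndex_X_pow_le n

/-- A nilgrowth witness bounds the nilpotence index of a nilpotent recursion operator. -/
theorem stmt7 (p : ℕ) (hp : p.Prime) {R : Type} [CommRing R] [CharP R p]
    (d D : ℕ) (hD1 : 1 ≤ D) (hDd : D ≤ d)
    (T : Module.End R (Polynomial R))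
    (hdeglow : ∀ f : Polynomial R, f ≠ 0 → (T f).degree < f.degree)
    (a : R) (cp : ℕ → Polynomial R) (r : Polynomial R)
    (hci : ∀ i, 1 ≤ i → i ≤ d - 1 → ∀ k : ℕ, (cp i).coeff k ≠ 0 → (k : ℤ) ≤ (i : ℤ) - D)
    (hcd : cp d = C a * X ^ d + r)
    (hr : r.degree ≤ ((d - D : ℕ) : WithBot ℕ))
    (hrec : ∀ n, d ≤ n →
      T ((X : Polynomial R) ^ n) = -∑ i ∈ Finset.Icc 1 d, cp i * T (X ^ (n - i)))
    (b : ℕ) (hb : ∃ k : ℕ, b = p ^ k) (hbd : d ≤ b)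
    (c : ℕ → ℚ) (hpos : ∀ n, 0 ≤ c n) (M : ℕ) (hM : 0 < M)
    -- discreteness:
    (hdisc : ∀ n : ℕ, ∃ m : ℕ, (M : ℚ) * c n = m)
    -- base property:
    (hbase0 : c 0 = 0)
    (hbase1 : ∀ i : ℕ, i + 1 ≤ d - 1 → c i < c (i + 1))
    (hbase2 : c (d - D) < c d)
    -- step property:
    (hstep : ∀ k : ℕ, ∀ i j : ℕ, ((i = d ∧ j = d) ∨ (j + D ≤ i ∧ i ≤ d)) →
      ∀ n m : ℕ, d * b ^ k ≤ n → n < d * b ^ (k + 1) → j * b ^ k ≤ m →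
        c m - c (m - j * b ^ k) ≤ c n - c (n - i * b ^ k)) :
    ∀ n : ℕ, (nilpIndex T (X ^ n) : ℚ) ≤ (M : ℚ) * c n := by
  have : Nontrivial R := CharP.nontrivial_of_char_ne_one hp.ne_one
  exact stmt7_general p hp d T (fun n _ => degree_map_X_pow_lt hdeglow n) cp hrec b hb (by omega)
    c M hM hdisc
    (strictMonoOn_of_lt_succ Set.ordConnected_Iio fun i _ _ hi => hbase1 i (Nat.le_pred_of_lt hi))
    fun k i hi j hj => hstep k i j (eq_and_eq_or_add_le_of_mem_support hDd hci hcd hr hi hj)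
end

section
/- Let b, d, D be integers with 1 ≤ D ≤ d ≤ b and β := b − D ≥ 2, and set c(i) := c_{b,β}(i/d) for integers i ≥ 0. Suppose that d = b, or d = b − 1, or D ≤ b/2. Then: (1) c(d − D) ≤ c(d); and (2) 0 = c(0) < c(1) < c(2) < ⋯ < c(d−1). -/
/-- The `i`-th base-`b` digit (for `i : ℤ`) of a real number `x ≥ 0`:
`⌊x·b^{−i}⌋ mod b`. -/
noncomputable def bDigit (b : ℕ) (x : ℝ) (i : ℤ) : ℤ :=
  ⌊x * (b : ℝ) ^ (-i)⌋ % b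

/-- The `(b,β)`-content of a real number `x ≥ 0`: read the base-`b` digits of `x`
in base `β`. -/
noncomputable def content (b β : ℕ) (x : ℝ) : ℝ :=
  ∑' i : ℤ, (bDigit b x i : ℝ) * (β : ℝ) ^ i

/-!
Write `c i` for the content of `i / d`. Long division of `i` by `d` gives
`β * c i = b * i / d + c (b * i % d)`, and everything is read off this recursion. For `d = b` and
`d = b - 1` the remainders are `0` and `i`, so `c` is linear in `i`. For `d ≤ b - 2` all digits are
at most `b - 2`; since `b ≤ 2 * β`, evaluating the recursion where `c` is largest bounds `c` by `2`,
strictly because the digits cannot all be `b - 2`. Evaluating it at the pair `i < j` for which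
`c j - c i` is smallest shows that this difference is positive: the leading digit grows by at least
`1`, and by at least `2` when the remainder drops, which outweighs the loss in the tail.
Finally, the leading digit of `(d - D) / d` is at most `β - 1`. If it is smaller, the bound `2` on
the tail gives `c (d - D) ≤ 1`; if it is `β - 1`, the remainder is at most `d - D`, so by
monotonicity `β * c (d - D) ≤ β - 1 + c (d - D)`.
-/

section Digits

variable {b : ℕ} {x : ℝ} {i : ℤ}

lemma bDigit_nonneg (hb : b ≠ 0) (x : ℝ) (i : ℤ) : 0 ≤ bDigit b x i :=
  Int.emod_nonneg _ (by exact_mod_cast hb)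

lemma bDigit_lt (hb : b ≠ 0) (x : ℝ) (i : ℤ) : bDigit b x i < b :=
  Int.emod_lt_of_pos _ (by omega)

lemma bDigit_mul_base (hb : b ≠ 0) (x : ℝ) (i : ℤ) :
    bDigit b (b * x) i = bDigit b x (i - 1) := by
  have hb' : (b : ℝ) ≠ 0 := by exact_mod_cast hb
  rw [bDigit, bDigit, neg_sub, sub_eq_neg_add, zpow_add_one₀ hb']
  congr 2
  ring

lemma bDigit_eq_zero_of_lt_zpow (hx0 : 0 ≤ x) (hx : x < (b : ℝ) ^ i) : bDigit b x i = 0 := by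
  have hfloor : ⌊x * (b : ℝ) ^ (-i)⌋ = 0 := by
    rw [zpow_neg, ← div_eq_mul_inv, Int.floor_eq_zero_iff]
    exact ⟨by positivity, (div_lt_one (hx0.trans_lt hx)).2 hx⟩
  rw [bDigit, hfloor, Int.zero_emod]

lemma bDigit_fract_of_neg (b : ℕ) (x : ℝ) (hi : i < 0) :
    bDigit b (Int.fract x) i = bDigit b x i := by
  obtain ⟨k, rfl⟩ : ∃ k : ℕ, i = -(k + 1 : ℕ) := ⟨(-i - 1).toNat, by omega⟩
  have hsplit : x * (b : ℝ) ^ (k + 1) =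
      Int.fract x * (b : ℝ) ^ (k + 1) + ((b * (⌊x⌋ * b ^ k) : ℤ) : ℝ) := by
    rw [Int.fract]
    push_cast
    ring
  rw [bDigit, bDigit, neg_neg, zpow_natCast, hsplit, Int.floor_add_intCast,
    Int.add_mul_emod_self_left]

lemma bDigit_eq_bDigit_fract_add (hb : 1 ≤ b) (hx0 : 0 ≤ x) (hxb : x < b) (i : ℤ) :
    bDigit b x i = bDigit b (Int.fract x) i + if i = 0 then ⌊x⌋ else 0 := by
  have hb' : (1 : ℝ) ≤ b := by exact_mod_cast hb
  rcases lt_trichotomy i 0 with hi | rfl | hi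
  · rw [bDigit_fract_of_neg b x hi, if_neg hi.ne, add_zero]
  · have hfloor : ⌊x⌋ < b := Int.floor_lt.2 (by exact_mod_cast hxb)
    rw [bDigit_eq_zero_of_lt_zpow (Int.fract_nonneg x) (by simpa using Int.fract_lt_one x)]
    simpa [bDigit] using Int.emod_eq_of_lt (Int.floor_nonneg.2 hx0) hfloor
  · have hbi : (b : ℝ) ≤ (b : ℝ) ^ i := by
      simpa using zpow_le_zpow_right₀ hb' (show (1 : ℤ) ≤ i by omega)
    rw [bDigit_eq_zero_of_lt_zpow hx0 (hxb.trans_le hbi),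
      bDigit_eq_zero_of_lt_zpow (Int.fract_nonneg x)
        ((Int.fract_lt_one x).trans_le (hb'.trans hbi)), if_neg hi.ne', add_zero]

end Digits

section Content

variable {b β : ℕ} {x : ℝ}

lemma summable_bDigit_mul_zpow (hb : 1 < b) (hβ : 1 < β) (hx : 0 ≤ x) :
    Summable fun i : ℤ => (bDigit b x i : ℝ) * (β : ℝ) ^ i := by
  have hb0 : b ≠ 0 := by omega
  have hb1 : (1 : ℝ) < b := by exact_mod_cast hb
  have hβ1 : (1 : ℝ) < β := by exact_mod_cast hβ
  refine summable_int_iff_summable_nat_and_neg.2 ⟨?_, ?_⟩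
  · obtain ⟨N, hN⟩ := pow_unbounded_of_one_lt x hb1
    refine summable_of_ne_finset_zero (s := Finset.range N) fun n hn => ?_
    have hxn : x < (b : ℝ) ^ n :=
      hN.trans_le (pow_le_pow_right₀ hb1.le (by simpa using hn))
    rw [bDigit_eq_zero_of_lt_zpow hx (by simpa using hxn), Int.cast_zero, zero_mul]
  · have hgeom : Summable fun n : ℕ => (b : ℝ) * (β : ℝ)⁻¹ ^ n :=
      (summable_geometric_of_lt_one (by positivity) (inv_lt_one_of_one_lt₀ hβ1)).mul_left _
    refine Summable.of_nonneg_of_le (fun n => ?_) (fun n => ?_) hgeom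
    · have hdigit : (0 : ℝ) ≤ bDigit b x (-n) := by exact_mod_cast bDigit_nonneg hb0 x (-n)
      positivity
    · have hdigit : (bDigit b x (-n) : ℝ) ≤ b := by exact_mod_cast (bDigit_lt hb0 x (-n)).le
      rw [zpow_neg, zpow_natCast, inv_pow]
      gcongr

lemma content_nonneg (hb : b ≠ 0) (β : ℕ) (x : ℝ) : 0 ≤ content b β x :=
  tsum_nonneg fun i => mul_nonneg (by exact_mod_cast bDigit_nonneg hb x i) (by positivity)

lemma content_zero (b β : ℕ) : content b β 0 = 0 := by
  simp [content, bDigit]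

lemma content_mul_base (hb : b ≠ 0) (hβ : β ≠ 0) (x : ℝ) :
    content b β (b * x) = β * content b β x := by
  have hβ' : (β : ℝ) ≠ 0 := by exact_mod_cast hβ
  unfold content
  rw [← tsum_mul_left,
    ← (Equiv.subRight (1 : ℤ)).tsum_eq fun i => (β : ℝ) * ((bDigit b x i : ℝ) * (β : ℝ) ^ i)]
  refine tsum_congr fun i => ?_
  rw [bDigit_mul_base hb, Equiv.subRight_apply, zpow_sub_one₀ hβ']
  field_simp

lemma content_eq_floor_add_content_fract (hb : 1 < b) (hβ : 1 < β) (hx0 : 0 ≤ x) (hxb : x < b) :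
    content b β x = ⌊x⌋ + content b β (Int.fract x) := by
  have hfloor : HasSum (fun i : ℤ => if i = 0 then (⌊x⌋ : ℝ) else 0) ⌊x⌋ := hasSum_ite_eq 0 _
  have hfract := (summable_bDigit_mul_zpow hb hβ (Int.fract_nonneg x)).hasSum
  refine (tsum_congr fun i => ?_).trans (hfloor.add hfract).tsum_eq
  rw [bDigit_eq_bDigit_fract_add hb.le hx0 hxb]
  split_ifs with hi
  · simp [hi, add_comm]
  · simp

lemma content_one (hb : 1 < b) (hβ : 1 < β) : content b β 1 = 1 := by
  have h := content_eq_floor_add_content_fract hb hβ zero_le_one (by exact_mod_cast hb)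
  simpa [content_zero] using h

lemma mul_content_div {d i : ℕ} (hb : 1 < b) (hβ : 1 < β) (hi : i < d) :
    β * content b β (i / d) = (b * i / d : ℕ) + content b β ((b * i % d : ℕ) / d) := by
  have hd : (0 : ℝ) < d := by exact_mod_cast i.zero_le.trans_lt hi
  have hlt : ((b * i : ℕ) : ℝ) / d < b := by
    rw [div_lt_iff₀ hd]
    exact_mod_cast Nat.mul_lt_mul_of_pos_left hi (by omega)
  rw [← content_mul_base (by omega) (by omega), ← mul_div_assoc, ← Nat.cast_mul,
    content_eq_floor_add_content_fract hb hβ (by positivity) hlt,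
    Int.fract_div_natCast_eq_div_natCast_mod, ← natCast_floor_eq_intCast_floor (by positivity),
    Nat.floor_div_eq_div]

lemma content_div_base {i : ℕ} (hb : 1 < b) (hβ : 1 < β) (hi : i < b) :
    content b β (i / b) = i / β := by
  have hβ' : (β : ℝ) ≠ 0 := by positivity
  have hrec := mul_content_div hb hβ hi
  rw [Nat.mul_div_cancel_left _ (by omega), Nat.mul_mod_right, Nat.cast_zero, zero_div,
    content_zero, add_zero] at hrec
  rw [eq_div_iff hβ', mul_comm, hrec]

lemma content_succ_div {d i : ℕ} (hβ : 1 < β) (hi : i < d) :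
    content (d + 1) β (i / d) = i / (β - 1) := by
  have hβ' : (1 : ℝ) < β := by exact_mod_cast hβ
  have hrec := mul_content_div (b := d + 1) (by omega) hβ hi
  rw [show (d + 1) * i = i + d * i by ring, Nat.add_mul_div_left _ _ (by omega),
    Nat.add_mul_mod_self_left, Nat.mod_eq_of_lt hi, Nat.div_eq_of_lt hi, zero_add] at hrec
  rw [eq_div_iff (by linarith)]
  linarith

end Content

section LongDivision

variable {b d i j : ℕ}

lemma mul_div_lt_mul_div (hd : 0 < d) (hdb : d ≤ b) (hij : i < j) : b * i / d < b * j / d := by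
  rw [← Nat.add_one_le_iff, ← Nat.add_div_right _ hd]
  exact Nat.div_le_div_right (by nlinarith)

lemma mul_div_add_two_le_of_mod_lt (hdb : d ≤ b) (hij : i < j) (hmod : b * j % d < b * i % d) :
    b * i / d + 2 ≤ b * j / d := by
  have hi := Nat.div_add_mod (b * i) d
  have hj := Nat.div_add_mod (b * j) d
  suffices d * (b * i / d + 1) < d * (b * j / d) from Nat.lt_of_mul_lt_mul_left this
  nlinarith

lemma mul_div_add_lt {k : ℕ} (hdb : d < b) (hk : 0 < k) (hik : i + k ≤ d) :
    b * i / d + k < b := by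
  have hd : 0 < d := by omega
  rw [← Nat.add_mul_div_right _ _ hd, Nat.div_lt_iff_lt_mul hd]
  calc b * i + k * d < b * i + k * b := by gcongr
    _ = b * (i + k) := by ring
    _ ≤ b * d := by gcongr

end LongDivision

section Monotonicity

variable {b β d i : ℕ}

lemma content_div_le_two (hβ : 1 < β) (hbβ : b ≤ 2 * β) (hdb : d < b) (hi : i < d) :
    content b β (i / d) ≤ 2 := by
  obtain ⟨m, hm, hmax⟩ := (Finset.range d).exists_max_image
    (fun j : ℕ => content b β ((j : ℝ) / d)) ⟨i, Finset.mem_range.2 hi⟩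
  rw [Finset.mem_range] at hm
  have htail := hmax (b * m % d) (Finset.mem_range.2 (Nat.mod_lt _ (by omega)))
  have hdigit : ((b * m / d : ℕ) : ℝ) + 2 ≤ b := by
    exact_mod_cast mul_div_add_lt hdb one_pos hm
  have hβ' : (1 : ℝ) < β := by exact_mod_cast hβ
  have hbβ' : (b : ℝ) ≤ 2 * β := by exact_mod_cast hbβ
  refine (hmax i (Finset.mem_range.2 hi)).trans ?_
  nlinarith [mul_content_div (by omega : 1 < b) hβ hm]

lemma content_div_lt_two_of_mul_div_add_two_lt (hβ : 1 < β) (hbβ : b ≤ 2 * β) (hdb : d < b)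
    (hi : i < d) (hdigit : b * i / d + 2 < b) : content b β (i / d) < 2 := by
  have htail := content_div_le_two hβ hbβ hdb (Nat.mod_lt (b * i) (by omega))
  have hdigit' : ((b * i / d : ℕ) : ℝ) + 3 ≤ b := by exact_mod_cast hdigit
  have hbβ' : (b : ℝ) ≤ 2 * β := by exact_mod_cast hbβ
  nlinarith [mul_content_div (by omega : 1 < b) hβ hi]

lemma content_div_lt_two (hβ : 1 < β) (hbβ : b ≤ 2 * β) (hdb : d + 2 ≤ b) (hi : i < d) :
    content b β (i / d) < 2 := by
  have hdigit : b * i / d + 2 ≤ b := mul_div_add_lt (by omega) one_pos hi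
  rcases hdigit.lt_or_eq with hlt | heq
  · exact content_div_lt_two_of_mul_div_add_two_lt hβ hbβ (by omega) hi hlt
  -- The leading digit is `b - 2`; since `d ≠ b - 1`, the second one is smaller.
  have hmod : b * i % d + 2 ≤ d := by
    have hdm := Nat.div_add_mod (b * i) d
    have hrem : b * i % d + b ≤ 2 * d := by nlinarith
    omega
  have htail := content_div_lt_two_of_mul_div_add_two_lt hβ hbβ (by omega) (by omega)
    (mul_div_add_lt (by omega) two_pos hmod)
  have heq' : ((b * i / d : ℕ) : ℝ) + 2 = b := by exact_mod_cast heq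
  have hbβ' : (b : ℝ) ≤ 2 * β := by exact_mod_cast hbβ
  nlinarith [mul_content_div (by omega : 1 < b) hβ hi]

lemma strictMonoOn_content_div_of_add_two_le (hβ : 1 < β) (hbβ : b ≤ 2 * β) (hdb : d + 2 ≤ b) :
    StrictMonoOn (fun i : ℕ => content b β (i / d)) (Set.Iio d) := by
  intro i hi j hj hij
  rw [Set.mem_Iio] at hi hj
  set c : ℕ → ℝ := fun i => content b β (i / d)
  obtain ⟨⟨k, l⟩, hkl, hmin⟩ := ((Finset.range d ×ˢ Finset.range d).filter
    fun p => p.1 < p.2).exists_min_image (fun p => c p.2 - c p.1) ⟨(i, j), by simp [hi, hj, hij]⟩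
  simp only [Finset.mem_filter, Finset.mem_product, Finset.mem_range, Prod.forall] at hkl hmin
  obtain ⟨⟨hk, hl⟩, hkl⟩ := hkl
  suffices hpos : 0 < c l - c k from sub_pos.1 (hpos.trans_le (hmin i j ⟨⟨hi, hj⟩, hij⟩))
  have hd : 0 < d := by omega
  have hβ' : (1 : ℝ) < β := by exact_mod_cast hβ
  have hrk := Nat.mod_lt (b * k) hd
  have hrl := Nat.mod_lt (b * l) hd
  have hck : β * c k = (b * k / d : ℕ) + c (b * k % d) := mul_content_div (by omega) hβ hk
  have hcl : β * c l = (b * l / d : ℕ) + c (b * l % d) := mul_content_div (by omega) hβ hl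
  have hone : ((b * k / d : ℕ) : ℝ) + 1 ≤ (b * l / d : ℕ) := by
    exact_mod_cast mul_div_lt_mul_div hd (by omega) hkl
  rcases lt_trichotomy (b * k % d) (b * l % d) with hr | hr | hr
  · have htail := hmin _ _ ⟨⟨hrk, hrl⟩, hr⟩
    nlinarith
  · rw [hr] at hck
    nlinarith
  · have htwo : ((b * k / d : ℕ) : ℝ) + 2 ≤ (b * l / d : ℕ) := by
      exact_mod_cast mul_div_add_two_le_of_mod_lt (by omega) hkl hr
    have hlt : c (b * k % d) < 2 := content_div_lt_two hβ hbβ hdb hrk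
    have hnonneg : 0 ≤ c (b * l % d) := content_nonneg (by omega) β _
    nlinarith

lemma strictMonoOn_content_div (hβ : 1 < β) (hdb : d ≤ b)
    (hcase : d = b ∨ d + 1 = b ∨ b ≤ 2 * β) :
    StrictMonoOn (fun i : ℕ => content b β (i / d)) (Set.Iio d) := by
  have hβ' : (1 : ℝ) < β := by exact_mod_cast hβ
  by_cases hd : d + 2 ≤ b
  · exact strictMonoOn_content_div_of_add_two_le hβ (by omega) hd
  intro i hi j hj hij
  rw [Set.mem_Iio] at hi hj
  have hij' : (i : ℝ) < j := by exact_mod_cast hij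
  obtain rfl | rfl : d = b ∨ d + 1 = b := by omega
  · simp only [content_div_base (by omega) hβ hi, content_div_base (by omega) hβ hj]
    gcongr
  · simp only [content_succ_div hβ hi, content_succ_div hβ hj]
    exact div_lt_div_of_pos_right hij' (sub_pos.2 hβ')

lemma content_sub_div_le_one_of_add_two_le {D : ℕ} (hβ : 1 < β) (hbβ : b ≤ 2 * β)
    (hdb : d + 2 ≤ b) (hD : 0 < D) (hDd : D ≤ d) (hβD : β + D = b) :
    content b β ((d - D : ℕ) / d) ≤ 1 := by
  have hi : d - D < d := by omega
  have hr := Nat.mod_lt (b * (d - D)) (by omega : 0 < d)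
  have hrec := mul_content_div (by omega : 1 < b) hβ hi
  have hβ' : (1 : ℝ) < β := by exact_mod_cast hβ
  have hdigit : b * (d - D) / d + 1 ≤ β := by
    have hlt := mul_div_add_lt (by omega : d < b) hD (Nat.sub_add_cancel hDd).le
    omega
  rcases hdigit.lt_or_eq with hlt | heq
  · have hlt' : ((b * (d - D) / d : ℕ) : ℝ) + 2 ≤ β := by exact_mod_cast hlt
    nlinarith [content_div_le_two hβ hbβ (by omega) hr]
  · have hmod : b * (d - D) % d ≤ d - D := by
      have hdm := Nat.div_add_mod (b * (d - D)) d
      have hrem : b * (d - D) % d + D * (b - d) = d := by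
        zify [hDd, (by omega : d ≤ b)] at hdm heq hβD ⊢
        linear_combination hdm - (d : ℤ) * heq - (d : ℤ) * hβD
      have hD' : D ≤ D * (b - d) := Nat.le_mul_of_pos_right D (by omega)
      omega
    have htail := (strictMonoOn_content_div_of_add_two_le hβ hbβ hdb).monotoneOn hr hi hmod
    have heq' : ((b * (d - D) / d : ℕ) : ℝ) + 1 = β := by exact_mod_cast heq
    nlinarith

lemma content_sub_div_le_one {D : ℕ} (hβ : 1 < β) (hD : 0 < D) (hDd : D ≤ d) (hdb : d ≤ b)
    (hβD : β + D = b) (hcase : d = b ∨ d + 1 = b ∨ b ≤ 2 * β) :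
    content b β ((d - D : ℕ) / d) ≤ 1 := by
  by_cases hd : d + 2 ≤ b
  · exact content_sub_div_le_one_of_add_two_le hβ (by omega) hd hD hDd hβD
  obtain rfl | rfl : d = b ∨ d + 1 = b := by omega
  · rw [content_div_base (by omega) hβ (by omega), show d - D = β by omega]
    exact div_self_le_one _
  · rw [content_succ_div hβ (by omega), show d - D = β - 1 by omega, Nat.cast_pred (by omega)]
    exact div_self_le_one _

end Monotonicity

/-- Base property of the nilgrowth witness `n ↦ c_{b,β}(n/d)`. -/
theorem stmt8 (b d D : ℕ) (hD1 : 1 ≤ D) (hDd : D ≤ d) (hdb : d ≤ b)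
    (hβ : 2 ≤ b - D)
    (hcase : d = b ∨ d = b - 1 ∨ 2 * D ≤ b) :
    content b (b - D) (((d - D : ℕ) : ℝ) / (d : ℝ)) ≤ content b (b - D) ((d : ℝ) / (d : ℝ)) ∧
    content b (b - D) ((0 : ℝ) / (d : ℝ)) = 0 ∧
    ∀ i : ℕ, i + 1 ≤ d - 1 →
      content b (b - D) ((i : ℝ) / (d : ℝ)) < content b (b - D) (((i : ℝ) + 1) / (d : ℝ)) := by
  have hd : (d : ℝ) ≠ 0 := by exact_mod_cast (by omega : d ≠ 0)
  have hcase' : d = b ∨ d + 1 = b ∨ b ≤ 2 * (b - D) := by omega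
  refine ⟨?_, ?_, fun i hi => ?_⟩
  · rw [div_self hd, content_one (by omega) hβ]
    exact content_sub_div_le_one hβ hD1 hDd hdb (by omega) hcase'
  · rw [zero_div, content_zero]
  · rw [← Nat.cast_add_one]
    exact strictMonoOn_content_div hβ hdb hcase' (Set.mem_Iio.2 (by omega))
      (Set.mem_Iio.2 (by omega)) i.lt_succ_self
end
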